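/- arXiv:1307.0676 — 2 statements merged into one kernel-verified Lean document; each statement's English description precedes it below -/
import Mathlib

section
/- The assignment σ ↦ T_σ := ⊕_{(s,t) ∈ σ} (s,t) gives a one-to-one correspondence between the set of triangulations of the convex n-gon and the set of isomorphism classes of basic cluster tilting objects in the category of Cohen–Macaulay Λ-modules. -/
set_option synthInstance.maxHeartbeats 1000000
set_option maxHeartbeats 1000000

open Polynomial Matrix

noncomputable section

/-- The exponent `c_{ij}` (with 0-based indices `i j : Fin n`, corresponding to the 1-based
`c_{i+1,j+1} = δ_{i+1>j+1} + δ_{i+1>j+2} − δ_{(i+1,j+1)=(1,n)}`). -/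
def cExp (n : ℕ) (i j : Fin n) : ℤ :=
  (if (j : ℕ) < (i : ℕ) then 1 else 0) + (if (j : ℕ) + 1 < (i : ℕ) then 1 else 0)
    - (if (i : ℕ) = 0 ∧ (j : ℕ) = n - 1 then 1 else 0)

/-- The subset `x^c · K[x]` of `K(x)`. -/
def xPow (K : Type*) [Field K] (c : ℤ) : Set (RatFunc K) :=
  {f | ∃ p : Polynomial K, f = RatFunc.X ^ c * algebraMap (Polynomial K) (RatFunc K) p}

/-- The carrier set of the tiled order `Λ ⊆ M_n(K(x))`:
matrices whose `(i,j)` entry lies in `x^{c_{ij}}·K[x]`. -/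
def lambdaCarrier (K : Type*) [Field K] (n : ℕ) : Set (Matrix (Fin n) (Fin n) (RatFunc K)) :=
  {M | ∀ i j, M i j ∈ xPow K (cExp n i j)}

/-- Exponent pattern of the module `(i,j)` (1-based `i j`; `k : ℕ` is a 0-based coordinate,
so the 1-based coordinate is `k+1`): `0` for `k+1 ≤ i`, `1` for `i < k+1 ≤ j`, `2` otherwise. -/
def dExp (i j k : ℕ) : ℤ := if k + 1 ≤ i then 0 else if k + 1 ≤ j then 1 else 2

/-- The carrier set of the `Λ`-module `(i,j)` inside the column space `K(x)^n`. -/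
def ijSet (K : Type*) [Field K] (n : ℕ) (i j : ℕ) : Set (Fin n → RatFunc K) :=
  {v | ∀ k : Fin n, v k ∈ xPow K (dExp i j (k : ℕ))}

/-- Column vectors form a module over the matrix ring via `mulVec`. -/
instance matVecModule (K : Type*) [Field K] (n : ℕ) :
    Module (Matrix (Fin n) (Fin n) (RatFunc K)) (Fin n → RatFunc K) where
  smul M v := M.mulVec v
  one_smul v := Matrix.one_mulVec v
  mul_smul M N v := (Matrix.mulVec_mulVec v M N).symm
  smul_zero M := Matrix.mulVec_zero M
  smul_add M u v := Matrix.mulVec_add M u v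
  add_smul M N v := Matrix.add_mulVec M N v
  zero_smul v := Matrix.zero_mulVec v

section ClusterTilting

variable {K : Type} [Field K] {n : ℕ}
variable (Λ : Subalgebra (Polynomial K) (Matrix (Fin n) (Fin n) (RatFunc K)))

/-- A `Λ`-module is Cohen–Macaulay if it is finitely generated and torsion-free over `K[x]`,
where `K[x]` acts through the central embedding `K[x] → Λ`. -/
def IsCMMod (M : Type) [AddCommGroup M] [Module ↥Λ M] : Prop :=
  letI : Module (Polynomial K) M := Module.compHom M (algebraMap (Polynomial K) ↥Λ)
  Module.Finite (Polynomial K) M ∧ NoZeroSMulDivisors (Polynomial K) M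

/-- Every short exact sequence of `Λ`-modules `0 → Z → B → W → 0` splits. -/
def SplitsExt (Z W : Type) [AddCommGroup Z] [Module ↥Λ Z]
    [AddCommGroup W] [Module ↥Λ W] : Prop :=
  ∀ (B : ModuleCat.{0} ↥Λ) (f : Z →ₗ[↥Λ] B) (g : B →ₗ[↥Λ] W),
    Function.Injective f → Function.Surjective g → LinearMap.range f = LinearMap.ker g →
    ∃ sec : W →ₗ[↥Λ] B, g ∘ₗ sec = LinearMap.id

/-- `Z` belongs to `add T`: `Z` is isomorphic to a direct summand of a finite direct sum of
copies of `T`. -/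
def InAdd (T Z : Type) [AddCommGroup T] [Module ↥Λ T] [AddCommGroup Z] [Module ↥Λ Z] : Prop :=
  ∃ (m : ℕ) (W : ModuleCat.{0} ↥Λ), Nonempty ((Fin m → T) ≃ₗ[↥Λ] (Z × W))

/-- `T` is a cluster tilting object of `CM(Λ)`:
`T` is Cohen–Macaulay and, for every Cohen–Macaulay `Λ`-module `Z`,
`add T = {Z : Ext¹(T,Z) = 0} = {Z : Ext¹(Z,T) = 0}`, Ext-vanishing being expressed by the
splitting of all short exact sequences. -/
def IsClusterTilting (T : Type) [AddCommGroup T] [Module ↥Λ T] : Prop :=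
  IsCMMod Λ T ∧
  ∀ Z : ModuleCat.{0} ↥Λ, IsCMMod Λ Z →
    ((InAdd Λ T Z ↔ SplitsExt Λ Z T) ∧ (InAdd Λ T Z ↔ SplitsExt Λ T Z))

/-- `T` is basic: no two of its indecomposable direct summands are isomorphic, i.e. `T` has no
direct summand of the form `A ⊕ A` with `A` nonzero. -/
def IsBasic (T : Type) [AddCommGroup T] [Module ↥Λ T] : Prop :=
  ¬ ∃ (A B : ModuleCat.{0} ↥Λ), Nontrivial A ∧ Nonempty (T ≃ₗ[↥Λ] (A × A × B))

/-- The module `T_σ = ⊕_{(s,t) ∈ σ} (s,t)` attached to a set `σ` of pairs. -/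
abbrev TModOf (E : ℕ → ℕ → Submodule ↥Λ (Fin n → RatFunc K)) (σ : Finset (ℕ × ℕ)) : Type :=
  ∀ p : {x : ℕ × ℕ // x ∈ σ}, ↥(E p.1.1 p.1.2)

end ClusterTilting

/-- `p` is a side of the convex `n`-gon. -/
def IsSide (n : ℕ) (p : ℕ × ℕ) : Prop :=
  (1 ≤ p.1 ∧ p.2 = p.1 + 1 ∧ p.2 ≤ n) ∨ (p.1 = 1 ∧ p.2 = n)

/-- Two pairs (diagonals) cross. -/
def Crossing (p q : ℕ × ℕ) : Prop :=
  (p.1 < q.1 ∧ q.1 < p.2 ∧ p.2 < q.2) ∨ (q.1 < p.1 ∧ p.1 < q.2 ∧ q.2 < p.2)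

/-- `σ` is a triangulation of the convex `n`-gon: it consists of sides and diagonals, contains
all `n` sides, its elements are pairwise non-crossing, and it is maximal with this property. -/
def IsTriangulation (n : ℕ) (σ : Finset (ℕ × ℕ)) : Prop :=
  (∀ p ∈ σ, 1 ≤ p.1 ∧ p.1 < p.2 ∧ p.2 ≤ n) ∧
  (∀ p : ℕ × ℕ, IsSide n p → p ∈ σ) ∧
  (∀ p ∈ σ, ∀ q ∈ σ, ¬ Crossing p q) ∧
  (∀ p : ℕ × ℕ, 1 ≤ p.1 → p.1 < p.2 → p.2 ≤ n → (∀ q ∈ σ, ¬ Crossing p q) → p ∈ σ)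

/-!
A torsion-free module `M` over the order is encoded by its first coordinate together with the
descending chain of lattices `L₀ ⊇ L₁ ⊇ ⋯` in it obtained from the other coordinates; here
`X Lₖ ⊆ Lₖ₊₁` and `Lₙ = X² L₀`. For the module `(s, t)` the chain has rank one and jumps at the
vertices `s` and `t` of the chord.

Every nonzero Cohen–Macaulay module has a summand `(s, t)`: in the chain of `M` one finds a vector
`w` and a linear form `φ` with `φ w = 1` such that `w` and `φ` define homomorphisms
`(s, t) → M → (s, t)`, where the form comes from the Smith normal form of a sublattice of `L₀`.
Hence every Cohen–Macaulay module is a direct sum of chord modules. Reducing homomorphisms between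
chord modules modulo `x`, where the composites through a different chord vanish, shows that the
multiplicities are determined by the module.

For two chords, a lift of the generator of `(s, t)` through an extension can be corrected to a
section unless the chords cross. If they cross, the two modules are, up to a shift by `x`, the
intersection and the sum of two lattices attached to opposite sides of the quadrilateral spanned by
the chords, and the Mayer–Vietoris sequence of these does not split. So a direct sum of chord
modules is cluster tilting exactly when its chords are those crossing none of its chords, which is
the definition of a triangulation.
-/

/-! ### Direct summands and extensions -/

theorem noZeroSMulDivisors_of_exact {R Z B W : Type*} [Ring R] [AddCommGroup Z] [Module R Z]
    [AddCommGroup B] [Module R B] [AddCommGroup W] [Module R W] [NoZeroSMulDivisors R Z]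
    [NoZeroSMulDivisors R W] {f : Z →ₗ[R] B} {g : B →ₗ[R] W} (hf : Function.Injective f)
    (hfg : Function.Exact f g) : NoZeroSMulDivisors R B where
  eq_zero_or_eq_zero_of_smul_eq_zero {c b} h := by
    refine or_iff_not_imp_left.2 fun hc => ?_
    have hgb : g b = 0 := (eq_zero_or_eq_zero_of_smul_eq_zero (by
      rw [← map_smul, h, map_zero])).resolve_left hc
    obtain ⟨z, rfl⟩ := (hfg b).1 hgb
    have hz : z = 0 := (eq_zero_or_eq_zero_of_smul_eq_zero (hf (by
      rw [map_smul, h, map_zero]))).resolve_left hc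
    rw [hz, map_zero]

section SmithForm

theorem finrank_lt_of_linearEquiv_prod {R M A W : Type*} [CommRing R] [IsDomain R]
    [IsPrincipalIdealRing R] [AddCommGroup M] [Module R M] [AddCommGroup A] [Module R A]
    [NoZeroSMulDivisors R A] [Module.Finite R A] [Nontrivial A] [AddCommGroup W] [Module R W]
    [NoZeroSMulDivisors R W] [Module.Finite R W] (e : M ≃ₗ[R] A × W) :
    Module.finrank R W < Module.finrank R M := by
  rw [e.finrank_eq, Module.finrank_prod, Nat.lt_add_left_iff_pos]
  exact Module.finrank_pos

variable {R F ι : Type*} [CommRing R] [IsDomain R] [IsPrincipalIdealRing R] [AddCommGroup F]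
  [Module R F] [Finite ι] {S : Submodule R F} {x : R}

theorem exists_basis_mem_iff_dvd (b : Module.Basis ι R F) (hx : x ≠ 0) (hS : ∀ v, x • v ∈ S) :
    ∃ (b' : Module.Basis ι R F) (a : ι → R), ∀ s, s ∈ S ↔ ∀ i, a i ∣ b'.repr s i := by
  cases nonempty_fintype ι
  have : Module.Finite R F := .of_basis b
  have : Module.Free R F := .of_basis b
  have hinj : Function.Injective ((LinearMap.lsmul R F x).codRestrict S hS) := fun v w h =>
    smul_right_injective F hx (congrArg Subtype.val h)
  obtain ⟨b', a, c, hc⟩ := S.exists_smith_normal_form_of_rank_eq b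
    (S.finrank_le.antisymm (LinearMap.finrank_le_finrank_of_injective hinj))
  refine ⟨b', a, fun s => c.mem_submodule_iff'.trans ?_⟩
  simp only [hc, ← mul_smul]
  constructor
  · rintro ⟨r, rfl⟩ i
    rw [b'.repr_sum_self]
    exact Dvd.intro_left _ rfl
  · intro h
    choose r hr using h
    refine ⟨r, ?_⟩
    conv_lhs => rw [← b'.sum_repr s]
    simp only [hr, mul_comm]

theorem exists_functional_pow_dvd (b : Module.Basis ι R F) (hx : Prime x) {e : ℕ}
    (hS : ∀ v, x ^ (e + 1) • v ∈ S) {w : F} (hw : x ^ e • w ∉ S) :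
    ∃ (φ : F →ₗ[R] R) (a : R) (u : F),
      φ (a • w + x ^ (e + 1) • u) = 1 ∧ ∀ s ∈ S, x ^ (e + 1) ∣ φ s := by
  obtain ⟨b', a, hb'⟩ := exists_basis_mem_iff_dvd b (pow_ne_zero _ hx.ne_zero) hS
  obtain ⟨i, hi⟩ := not_forall.1 (mt (hb' _).2 hw)
  rw [map_smul, Finsupp.smul_apply, smul_eq_mul] at hi
  have hai : a i ∣ x ^ (e + 1) := by simpa using (hb' _).1 (hS (b' i)) i
  obtain ⟨k, hk, hak⟩ := (dvd_prime_pow hx _).1 hai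
  obtain rfl : k = e + 1 := by
    by_contra hne
    exact hi ((hak.dvd.trans (pow_dvd_pow x (by lia))).mul_right _)
  have hwi : ¬ x ∣ b'.repr w i := fun h => hi (hak.dvd.trans (pow_succ x e ▸ mul_dvd_mul_left _ h))
  obtain ⟨β, α, hαβ⟩ := (hx.coprime_iff_not_dvd.2 hwi).pow_left (m := e + 1)
  refine ⟨b'.coord i, α, β • b' i, ?_, fun s hs => hak.symm.dvd.trans ((hb' s).1 hs i)⟩
  simpa [add_comm, mul_comm] using hαβ

end SmithForm

section IsRetract

variable {R : Type*} [Ring R] {A B M N : Type*} [AddCommGroup A] [Module R A] [AddCommGroup B]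
  [Module R B] [AddCommGroup M] [Module R M] [AddCommGroup N] [Module R N]

variable (R A M) in
/-- `A` is, up to isomorphism, a direct summand of `M`. -/
def IsRetract : Prop := ∃ (i : A →ₗ[R] M) (p : M →ₗ[R] A), p ∘ₗ i = LinearMap.id

namespace IsRetract

theorem of_linearEquiv (e : A ≃ₗ[R] M) : IsRetract R A M := ⟨e, e.symm, e.symm_comp⟩

theorem refl : IsRetract R A A := of_linearEquiv (.refl R A)

theorem trans (h : IsRetract R A M) (h' : IsRetract R M N) : IsRetract R A N := by
  obtain ⟨i, p, hpi⟩ := h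
  obtain ⟨i', p', hpi'⟩ := h'
  refine ⟨i' ∘ₗ i, p ∘ₗ p', ?_⟩
  rw [LinearMap.comp_assoc, ← LinearMap.comp_assoc i, hpi', LinearMap.id_comp, hpi]

theorem fst : IsRetract R M (M × N) := ⟨LinearMap.inl R M N, LinearMap.fst R M N, rfl⟩

theorem exists_equiv_prod_ker (h : IsRetract R A M) :
    ∃ p : M →ₗ[R] A, Nonempty (M ≃ₗ[R] A × LinearMap.ker p) := by
  obtain ⟨i, p, hpi⟩ := h
  have hexact : Function.Exact (LinearMap.ker p).subtype p := LinearMap.exact_subtype_ker_map p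
  obtain ⟨e, -⟩ := hexact.splitSurjectiveEquiv (LinearMap.ker p).injective_subtype ⟨i, hpi⟩
  exact ⟨p, ⟨e.trans (LinearEquiv.prodComm R _ _)⟩⟩

variable {ι : Type*} {P Q : ι → Type*} [∀ a, AddCommGroup (P a)] [∀ a, Module R (P a)]
  [∀ a, AddCommGroup (Q a)] [∀ a, Module R (Q a)]

theorem eval (a : ι) : IsRetract R (P a) (∀ a, P a) := by
  classical
  exact ⟨LinearMap.single R P a, LinearMap.proj a, LinearMap.proj_comp_single_same R P a⟩

theorem pi (h : ∀ a, IsRetract R (P a) (Q a)) : IsRetract R (∀ a, P a) (∀ a, Q a) := by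
  choose i p hpi using h
  exact ⟨LinearMap.piMap i, LinearMap.piMap p,
    LinearMap.ext fun x => funext fun a => LinearMap.congr_fun (hpi a) (x a)⟩

theorem prod_self_of_ne {a b : ι} (hab : a ≠ b) (e : P a ≃ₗ[R] P b) :
    IsRetract R (P a × P a) (∀ i, P i) := by
  classical
  refine ⟨(LinearMap.single R P a).coprod (LinearMap.single R P b ∘ₗ e.toLinearMap),
    (LinearMap.proj a).prod (e.symm.toLinearMap ∘ₗ LinearMap.proj b), LinearMap.ext fun x => ?_⟩
  refine Prod.ext ?_ ?_
  · simp [hab]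
  · simp [hab.symm]

theorem exists_sum_comp_eq {κ : Type*} [Fintype ι] [DecidableEq κ]
    (h : IsRetract R (κ → A) (∀ a, P a)) :
    ∃ (f : ∀ a, κ → A →ₗ[R] P a) (g : ∀ a, κ → P a →ₗ[R] A),
      ∀ k l, ∑ a, g a k ∘ₗ f a l = if k = l then LinearMap.id else 0 := by
  classical
  obtain ⟨i, π, hπi⟩ := h
  refine ⟨fun a l => LinearMap.proj a ∘ₗ i ∘ₗ LinearMap.single R (fun _ => A) l,
    fun a k => LinearMap.proj k ∘ₗ π ∘ₗ LinearMap.single R P a,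
    fun k l => LinearMap.ext fun x => ?_⟩
  have hx : π (i (Pi.single l x)) = Pi.single l x := LinearMap.congr_fun hπi _
  simp only [LinearMap.sum_apply, LinearMap.comp_apply, LinearMap.proj_apply,
    LinearMap.single_apply, ← Finset.sum_apply, ← map_sum, Finset.univ_sum_single, hx]
  split_ifs with hkl
  · rw [hkl, Pi.single_eq_same, LinearMap.id_apply]
  · rw [Pi.single_eq_of_ne hkl, LinearMap.zero_apply]

end IsRetract

end IsRetract

section Summands

variable {K : Type} [Field K] {n : ℕ}
  {Λ : Subalgebra K[X] (Matrix (Fin n) (Fin n) (RatFunc K))}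
  {A M T T' : Type} [AddCommGroup A] [Module Λ A] [AddCommGroup M] [Module Λ M] [AddCommGroup T]
  [Module Λ T] [AddCommGroup T'] [Module Λ T']

theorem inAdd_iff_isRetract : InAdd Λ T A ↔ ∃ m : ℕ, IsRetract Λ A (Fin m → T) := by
  refine exists_congr fun m => ⟨fun ⟨W, ⟨e⟩⟩ => IsRetract.fst.trans (.of_linearEquiv e.symm),
    fun h => ?_⟩
  obtain ⟨p, he⟩ := h.exists_equiv_prod_ker
  exact ⟨ModuleCat.of Λ (LinearMap.ker p), he⟩

theorem isBasic_iff_isRetract : IsBasic Λ T ↔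
    ∀ A : ModuleCat.{0} Λ, Nontrivial A → ¬ IsRetract Λ (A × A) T := by
  refine not_exists.trans (forall_congr' fun A => not_exists.trans ⟨fun h hA hr => ?_,
    fun h W ⟨hA, ⟨e⟩⟩ => h hA ?_⟩)
  · obtain ⟨p, ⟨e⟩⟩ := hr.exists_equiv_prod_ker
    exact h (ModuleCat.of Λ (LinearMap.ker p)) ⟨hA, ⟨e.trans (LinearEquiv.prodAssoc Λ A A _)⟩⟩
  · exact IsRetract.fst.trans (.of_linearEquiv (e.trans (LinearEquiv.prodAssoc Λ A A W).symm).symm)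

theorem InAdd.of_isRetract (h : InAdd Λ T M) (hA : IsRetract Λ A M) : InAdd Λ T A := by
  obtain ⟨m, hm⟩ := inAdd_iff_isRetract.1 h
  exact inAdd_iff_isRetract.2 ⟨m, hA.trans hm⟩

theorem inAdd_pi_iff {ι : Type} [Finite ι] {P : ι → Type} [∀ a, AddCommGroup (P a)]
    [∀ a, Module Λ (P a)] : InAdd Λ T (∀ a, P a) ↔ ∀ a, InAdd Λ T (P a) := by
  refine ⟨fun h a => h.of_isRetract (.eval a), fun h => ?_⟩
  choose m hm using fun a => inAdd_iff_isRetract.1 (h a)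
  obtain ⟨k, ⟨e⟩⟩ := Finite.exists_equiv_fin ((a : ι) × Fin (m a))
  exact inAdd_iff_isRetract.2 ⟨k, (IsRetract.pi hm).trans (.of_linearEquiv
    ((LinearEquiv.piCurry Λ fun _ _ => T).symm.trans (LinearEquiv.funCongrLeft Λ T e.symm)))⟩

theorem InAdd.congr_left (h : InAdd Λ T A) (e : T ≃ₗ[Λ] T') : InAdd Λ T' A := by
  obtain ⟨m, hm⟩ := inAdd_iff_isRetract.1 h
  exact inAdd_iff_isRetract.2 ⟨m, hm.trans (.pi fun _ => .of_linearEquiv e)⟩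

theorem IsBasic.congr (h : IsBasic Λ T) (e : T ≃ₗ[Λ] T') : IsBasic Λ T' :=
  isBasic_iff_isRetract.2 fun A hA hr =>
    isBasic_iff_isRetract.1 h A hA (hr.trans (.of_linearEquiv e.symm))

end Summands

section SplitsExt

variable {K : Type} [Field K] {n : ℕ}
  {Λ : Subalgebra K[X] (Matrix (Fin n) (Fin n) (RatFunc K))}
  {Z Z' W W' B : Type} [AddCommGroup Z] [Module Λ Z] [AddCommGroup Z'] [Module Λ Z']
  [AddCommGroup W] [Module Λ W] [AddCommGroup W'] [Module Λ W'] [AddCommGroup B] [Module Λ B]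

theorem exists_section_iff_exists_retraction {f : Z →ₗ[Λ] B} {g : B →ₗ[Λ] W}
    (hf : Function.Injective f) (hg : Function.Surjective g)
    (hfg : LinearMap.range f = LinearMap.ker g) :
    (∃ s, g ∘ₗ s = LinearMap.id) ↔ ∃ r, r ∘ₗ f = LinearMap.id :=
  ((LinearMap.exact_iff.2 hfg.symm).split_tfae hf hg).out 0 1

/-- The section of the pullback of the sequence along `u` provides the lift. -/
theorem SplitsExt.exists_lift (h : SplitsExt Λ Z W) {f : Z →ₗ[Λ] B} {g : B →ₗ[Λ] W'}
    (hf : Function.Injective f) (hg : Function.Surjective g)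
    (hfg : LinearMap.range f = LinearMap.ker g) (u : W →ₗ[Λ] W') : ∃ s, g ∘ₗ s = u := by
  let P : Submodule Λ (B × W) :=
    LinearMap.eqLocus (g ∘ₗ LinearMap.fst Λ B W) (u ∘ₗ LinearMap.snd Λ B W)
  let f' : Z →ₗ[Λ] P := (LinearMap.inl Λ B W ∘ₗ f).codRestrict P fun z =>
    ((LinearMap.exact_iff.2 hfg.symm).apply_apply_eq_zero z).trans (map_zero u).symm
  let g' : P →ₗ[Λ] W := LinearMap.snd Λ B W ∘ₗ P.subtype
  have hf' : Function.Injective f' := fun x y hxy => hf (congrArg (fun z => z.1.1) hxy)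
  have hg' : Function.Surjective g' := fun w => by
    obtain ⟨b, hb⟩ := hg (u w)
    exact ⟨⟨(b, w), hb⟩, rfl⟩
  have hfg' : LinearMap.range f' = LinearMap.ker g' := by
    refine le_antisymm (LinearMap.range_le_ker_iff.2 rfl) ?_
    rintro ⟨⟨b, w⟩, hbw⟩ hw
    obtain rfl : w = 0 := hw
    obtain ⟨z, rfl⟩ : b ∈ LinearMap.range f := hfg ▸ LinearMap.mem_ker.2 (hbw.trans (map_zero u))
    exact ⟨z, rfl⟩
  obtain ⟨s, hs⟩ := h (ModuleCat.of Λ P) f' g' hf' hg' hfg'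
  refine ⟨LinearMap.fst Λ B W ∘ₗ P.subtype ∘ₗ s, LinearMap.ext fun w => ?_⟩
  exact (s w).2.trans (congrArg u (LinearMap.congr_fun hs w))

/-- The retraction of the pushout of the sequence along `u` provides the extension. -/
theorem SplitsExt.exists_extension (h : SplitsExt Λ Z W) {f : Z' →ₗ[Λ] B} {g : B →ₗ[Λ] W}
    (hf : Function.Injective f) (hg : Function.Surjective g)
    (hfg : LinearMap.range f = LinearMap.ker g) (u : Z' →ₗ[Λ] Z) : ∃ r, r ∘ₗ f = u := by
  let P : Submodule Λ (B × Z) := LinearMap.range (f.prod (-u))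
  let f' : Z →ₗ[Λ] (B × Z) ⧸ P := P.mkQ ∘ₗ LinearMap.inr Λ B Z
  let g' : (B × Z) ⧸ P →ₗ[Λ] W := P.liftQ (g ∘ₗ LinearMap.fst Λ B Z) <| by
    rintro _ ⟨z, rfl⟩
    exact (LinearMap.exact_iff.2 hfg.symm).apply_apply_eq_zero z
  have hf' : Function.Injective f' := by
    refine (injective_iff_map_eq_zero _).2 fun z hz => ?_
    obtain ⟨z', hz'⟩ := (Submodule.Quotient.mk_eq_zero P).1 hz
    obtain ⟨hfz', rfl⟩ : f z' = 0 ∧ -u z' = z := Prod.ext_iff.1 hz'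
    rw [hf (hfz'.trans (map_zero f).symm), map_zero, neg_zero]
  have hg' : Function.Surjective g' := fun w => by
    obtain ⟨b, rfl⟩ := hg w
    exact ⟨P.mkQ (b, 0), rfl⟩
  have hfg' : LinearMap.range f' = LinearMap.ker g' := by
    refine le_antisymm (LinearMap.range_le_ker_iff.2 (LinearMap.ext fun _ => map_zero g)) ?_
    intro x hx
    obtain ⟨⟨b, z⟩, rfl⟩ := P.mkQ_surjective x
    obtain ⟨z', rfl⟩ : b ∈ LinearMap.range f := hfg ▸ LinearMap.mem_ker.2 hx
    exact ⟨z + u z', (Submodule.Quotient.eq P).2 ⟨-z', by simp⟩⟩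
  obtain ⟨r, hr⟩ := (exists_section_iff_exists_retraction hf' hg' hfg').1
    (h (ModuleCat.of Λ ((B × Z) ⧸ P)) f' g' hf' hg' hfg')
  refine ⟨r ∘ₗ P.mkQ ∘ₗ LinearMap.inl Λ B Z, LinearMap.ext fun z => ?_⟩
  have hglue : P.mkQ (f z, 0) = f' (u z) := (Submodule.Quotient.eq P).2 ⟨z, by simp⟩
  exact (congrArg r hglue).trans (LinearMap.congr_fun hr (u z))

theorem SplitsExt.of_isRetract (h : SplitsExt Λ Z W) (hZ : IsRetract Λ Z' Z)
    (hW : IsRetract Λ W' W) : SplitsExt Λ Z' W' := by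
  obtain ⟨i, p, hpi⟩ := hW
  obtain ⟨j, q, hqj⟩ := hZ
  have hZW' : SplitsExt Λ Z W' := fun B f g hf hg hfg => by
    obtain ⟨s, hs⟩ := h.exists_lift hf hg hfg p
    exact ⟨s ∘ₗ i, by rw [← LinearMap.comp_assoc, hs, hpi]⟩
  intro B f g hf hg hfg
  obtain ⟨r, hr⟩ := hZW'.exists_extension hf hg hfg j
  exact (exists_section_iff_exists_retraction hf hg hfg).2
    ⟨q ∘ₗ r, by rw [LinearMap.comp_assoc, hr, hqj]⟩

theorem SplitsExt.congr (h : SplitsExt Λ Z W) (e : Z ≃ₗ[Λ] Z') (e' : W ≃ₗ[Λ] W') :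
    SplitsExt Λ Z' W' :=
  h.of_isRetract (.of_linearEquiv e.symm) (.of_linearEquiv e'.symm)

/-- A section of the sequence `0 → N₁ ⊓ N₂ → N₁ × N₂ → N₁ ⊔ N₂ → 0`, written in components. -/
theorem SplitsExt.exists_add_eq {N₁ N₂ : Submodule Λ B}
    (h : SplitsExt Λ ↥(N₁ ⊓ N₂) ↥(N₁ ⊔ N₂)) :
    ∃ (s₁ : ↥(N₁ ⊔ N₂) →ₗ[Λ] N₁) (s₂ : ↥(N₁ ⊔ N₂) →ₗ[Λ] N₂), ∀ v, (s₁ v : B) + s₂ v = v := by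
  let f : ↥(N₁ ⊓ N₂) →ₗ[Λ] N₁ × N₂ :=
    { toFun := fun x => (⟨x, x.2.1⟩, ⟨-x, neg_mem x.2.2⟩)
      map_add' := fun x y => Prod.ext rfl (Subtype.ext (neg_add (x : B) y))
      map_smul' := fun a x => Prod.ext rfl (Subtype.ext (smul_neg a (x : B)).symm) }
  let g : N₁ × N₂ →ₗ[Λ] ↥(N₁ ⊔ N₂) :=
    (Submodule.inclusion le_sup_left).coprod (Submodule.inclusion le_sup_right)
  have hf : Function.Injective f := fun x y hxy =>
    Subtype.ext (congrArg (fun z => (z.1 : B)) hxy)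
  have hg : Function.Surjective g := by
    rintro ⟨v, hv⟩
    obtain ⟨a, ha, b, hb, rfl⟩ := Submodule.mem_sup.1 hv
    exact ⟨(⟨a, ha⟩, ⟨b, hb⟩), rfl⟩
  have hfg : LinearMap.range f = LinearMap.ker g := by
    ext ⟨⟨a, ha⟩, ⟨b, hb⟩⟩
    have hker : (⟨a, ha⟩, ⟨b, hb⟩) ∈ LinearMap.ker g ↔ a + b = 0 := Subtype.ext_iff
    rw [hker, LinearMap.mem_range]
    constructor
    · rintro ⟨x, hx⟩
      obtain ⟨rfl, rfl⟩ : (x : B) = a ∧ -(x : B) = b :=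
        ⟨congrArg (fun y => (y.1 : B)) hx, congrArg (fun y => (y.2 : B)) hx⟩
      exact add_neg_cancel _
    · intro hab
      obtain rfl := eq_neg_of_add_eq_zero_right hab
      exact ⟨⟨a, ha, neg_mem_iff.1 hb⟩, rfl⟩
  obtain ⟨s, hs⟩ := h (ModuleCat.of Λ (N₁ × N₂)) f g hf hg hfg
  exact ⟨LinearMap.fst _ _ _ ∘ₗ s, LinearMap.snd _ _ _ ∘ₗ s,
    fun v => congrArg Subtype.val (LinearMap.congr_fun hs v)⟩

variable {ι κ : Type} [Finite ι] {P : ι → Type} {Q : κ → Type} [∀ a, AddCommGroup (P a)]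
  [∀ a, Module Λ (P a)] [∀ b, AddCommGroup (Q b)] [∀ b, Module Λ (Q b)]

theorem splitsExt_pi_right_iff : SplitsExt Λ Z (∀ a, P a) ↔ ∀ a, SplitsExt Λ Z (P a) := by
  classical
  cases nonempty_fintype ι
  refine ⟨fun h a => h.of_isRetract .refl (.eval a), fun h B f g hf hg hfg => ?_⟩
  choose s hs using fun a => (h a).exists_lift hf hg hfg (LinearMap.single Λ P a)
  refine ⟨∑ a, s a ∘ₗ LinearMap.proj a, LinearMap.ext fun x => ?_⟩
  have hsx (a : ι) : g (s a (x a)) = Pi.single a (x a) := LinearMap.congr_fun (hs a) (x a)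
  simp only [LinearMap.comp_apply, LinearMap.sum_apply, LinearMap.proj_apply, map_sum, hsx,
    LinearMap.id_apply, Finset.univ_sum_single]

omit [Finite ι] in
theorem splitsExt_pi_left_iff : SplitsExt Λ (∀ b, Q b) W ↔ ∀ b, SplitsExt Λ (Q b) W := by
  refine ⟨fun h b => h.of_isRetract (.eval b) .refl, fun h B f g hf hg hfg => ?_⟩
  choose r hr using fun b => (h b).exists_extension hf hg hfg (LinearMap.proj b)
  exact (exists_section_iff_exists_retraction hf hg hfg).2 ⟨LinearMap.pi r,
    LinearMap.ext fun x => funext fun b => LinearMap.congr_fun (hr b) x⟩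

end SplitsExt

section IsCMMod

variable {K : Type} [Field K] {n : ℕ}
  {Λ : Subalgebra K[X] (Matrix (Fin n) (Fin n) (RatFunc K))}
  {M T T' : Type} [AddCommGroup M] [Module Λ M] [AddCommGroup T] [Module Λ T]
  [AddCommGroup T'] [Module Λ T']

theorem isCMMod_iff [Module K[X] M] [IsScalarTower K[X] Λ M] :
    IsCMMod Λ M ↔ Module.Finite K[X] M ∧ NoZeroSMulDivisors K[X] M := by
  have hM : Module.compHom M (algebraMap K[X] Λ) = ‹Module K[X] M› :=
    Module.ext' _ _ fun p m => algebraMap_smul Λ p m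
  unfold IsCMMod
  rw [hM]

theorem IsCMMod.of_isRetract (hM : IsCMMod Λ M) (h : IsRetract Λ T M) : IsCMMod Λ T := by
  let : Module K[X] M := Module.compHom M (algebraMap K[X] Λ)
  let : Module K[X] T := Module.compHom T (algebraMap K[X] Λ)
  have : IsScalarTower K[X] Λ M := .of_algebraMap_smul fun _ _ => rfl
  have : IsScalarTower K[X] Λ T := .of_algebraMap_smul fun _ _ => rfl
  obtain ⟨_, _⟩ := isCMMod_iff.1 hM
  obtain ⟨i, p, hpi⟩ := h
  have hinv : Function.LeftInverse p i := LinearMap.congr_fun hpi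
  exact isCMMod_iff.2 ⟨.of_surjective (p.restrictScalars K[X]) hinv.surjective,
    hinv.injective.noZeroSMulDivisors i (map_zero i) (i.restrictScalars K[X]).map_smul⟩

theorem IsCMMod.congr (h : IsCMMod Λ T) (e : T ≃ₗ[Λ] T') : IsCMMod Λ T' :=
  h.of_isRetract (.of_linearEquiv e.symm)

theorem IsClusterTilting.congr (h : IsClusterTilting Λ T) (e : T ≃ₗ[Λ] T') :
    IsClusterTilting Λ T' := by
  refine ⟨h.1.congr e, fun Z hZ => ?_⟩
  have hadd : InAdd Λ T' Z ↔ InAdd Λ T Z := ⟨fun h => h.congr_left e.symm, fun h => h.congr_left e⟩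
  refine ⟨hadd.trans ((h.2 Z hZ).1.trans ?_), hadd.trans ((h.2 Z hZ).2.trans ?_)⟩
  · exact ⟨fun h => h.congr (.refl Λ Z) e, fun h => h.congr (.refl Λ Z) e.symm⟩
  · exact ⟨fun h => h.congr e (.refl Λ Z), fun h => h.congr e.symm (.refl Λ Z)⟩

end IsCMMod

/-! ### The tiled order -/

namespace PolygonOrder

section XPow

variable {K : Type*} [Field K] {a b c : ℤ} {f g : RatFunc K}

theorem mul_mem_xPow (hf : f ∈ xPow K a) (hg : g ∈ xPow K b) : f * g ∈ xPow K (a + b) := by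
  obtain ⟨p, rfl⟩ := hf
  obtain ⟨q, rfl⟩ := hg
  exact ⟨p * q, by rw [map_mul, zpow_add₀ RatFunc.X_ne_zero]; ring⟩

theorem mem_xPow_zero : f ∈ xPow K 0 ↔ ∃ p : K[X], f = algebraMap K[X] (RatFunc K) p := by
  simp [xPow]

theorem zpow_mem_xPow (c : ℤ) : (RatFunc.X : RatFunc K) ^ c ∈ xPow K c := ⟨1, by simp⟩

theorem algebraMap_mem_xPow_natCast {d : ℕ} {p : K[X]} :
    algebraMap K[X] (RatFunc K) p ∈ xPow K d ↔ X ^ d ∣ p := by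
  refine exists_congr fun q => ?_
  rw [zpow_natCast, ← RatFunc.algebraMap_X, ← map_pow, ← map_mul,
    (RatFunc.algebraMap_injective K).eq_iff]

theorem zpow_mul_mem_xPow_iff : RatFunc.X ^ a * f ∈ xPow K (a + c) ↔ f ∈ xPow K c := by
  refine exists_congr fun p => ?_
  rw [zpow_add₀ RatFunc.X_ne_zero, mul_assoc,
    mul_right_inj' (zpow_ne_zero a RatFunc.X_ne_zero)]

theorem xPow_antitone : Antitone (xPow K) := by
  intro a b hab f hf
  obtain ⟨d, rfl⟩ := Int.le.dest hab
  have hX : (RatFunc.X : RatFunc K) ^ d ∈ xPow K 0 := mem_xPow_zero.2 ⟨X ^ d, by simp⟩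
  have h := mul_mem_xPow hX ((zpow_mul_mem_xPow_iff (a := -d)).2 hf)
  rwa [_root_.zpow_neg, zpow_natCast,
    mul_inv_cancel_left₀ (pow_ne_zero _ RatFunc.X_ne_zero), zero_add, add_comm a,
    neg_add_cancel_left] at h

theorem one_mem_xPow (hc : c ≤ 0) : (1 : RatFunc K) ∈ xPow K c :=
  xPow_antitone hc (mem_xPow_zero.2 ⟨1, (map_one _).symm⟩)

theorem one_notMem_xPow_one : (1 : RatFunc K) ∉ xPow K 1 := by
  rw [← map_one (algebraMap K[X] (RatFunc K)), ← Nat.cast_one, algebraMap_mem_xPow_natCast,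
    pow_one]
  exact fun h => not_isUnit_X (isUnit_of_dvd_one h)

variable (K c) in
/-- The fractional ideal `x^c · K[x]`, that is, `xPow K c` as a `K[x]`-submodule of `K(x)`. -/
def xPowSubmodule : Submodule K[X] (RatFunc K) where
  carrier := xPow K c
  add_mem' := by
    rintro _ _ ⟨p, rfl⟩ ⟨q, rfl⟩
    exact ⟨p + q, by rw [map_add, mul_add]⟩
  zero_mem' := ⟨0, by rw [map_zero, mul_zero]⟩
  smul_mem' := by
    rintro r _ ⟨p, rfl⟩
    exact ⟨r * p, by rw [Algebra.smul_def, map_mul]; ring⟩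

end XPow

section Order

variable (K : Type) [Field K] (n : ℕ)

theorem neg_one_le_cExp (i j : Fin n) : -1 ≤ cExp n i j := by
  unfold cExp
  split_ifs <;> omega

theorem cExp_le_two (i j : Fin n) : cExp n i j ≤ 2 := by
  unfold cExp
  split_ifs <;> omega

variable {n} in
theorem cExp_le_one {i j : Fin n} (h : (i : ℕ) ≤ j + 1) : cExp n i j ≤ 1 := by
  unfold cExp
  split_ifs <;> omega

variable {n} in
theorem cExp_nonpos {i j : Fin n} (h : i ≤ j) : cExp n i j ≤ 0 := by
  rw [Fin.le_def] at h
  unfold cExp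
  split_ifs <;> omega

variable [n.AtLeastTwo]

theorem cExp_triangle (i j k : Fin n) : cExp n i k ≤ cExp n i j + cExp n j k := by
  have := Nat.AtLeastTwo.prop (n := n)
  unfold cExp
  split_ifs <;> omega

theorem cExp_self (i : Fin n) : cExp n i i = 0 := by
  have := Nat.AtLeastTwo.prop (n := n)
  unfold cExp
  split_ifs <;> omega

/-- The tiled order `Λ`, with carrier `lambdaCarrier K n`. -/
def polygonOrder : Subalgebra K[X] (Matrix (Fin n) (Fin n) (RatFunc K)) where
  carrier := lambdaCarrier K n
  mul_mem' {A B} hA hB i k := by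
    rw [Matrix.mul_apply]
    exact (xPowSubmodule K _).sum_mem fun j _ =>
      xPow_antitone (cExp_triangle n i j k) (mul_mem_xPow (hA i j) (hB j k))
  add_mem' hA hB i j := (xPowSubmodule K _).add_mem (hA i j) (hB i j)
  algebraMap_mem' p i j := by
    rw [Matrix.algebraMap_matrix_apply]
    split_ifs with h
    · rw [h, cExp_self]
      exact mem_xPow_zero.2 ⟨p, rfl⟩
    · exact (xPowSubmodule K _).zero_mem

variable {K n}

/-- The matrix with `f` in position `(i, j)` and zeros elsewhere, as an element of the order. -/
def single (i j : Fin n) (f : RatFunc K) (hf : f ∈ xPow K (cExp n i j)) : polygonOrder K n :=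
  ⟨Matrix.single i j f, fun i' j' => by
    by_cases h : i = i' ∧ j = j'
    · obtain ⟨rfl, rfl⟩ := h
      rwa [Matrix.single_apply_same]
    · rw [Matrix.single_apply, if_neg h]
      exact (xPowSubmodule K _).zero_mem⟩

theorem coe_single (i j : Fin n) (f : RatFunc K) (hf : f ∈ xPow K (cExp n i j)) :
    (single i j f hf : Matrix (Fin n) (Fin n) (RatFunc K)) = Matrix.single i j f := rfl

variable (K n) in
/-- The first row of matrix units: `row K n k` is the matrix unit in position `(0, k)` for `k < n`.
It is continued by `x²` times the idempotent in position `(0, 0)` for all `k ≥ n`, so that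
statements about consecutive entries need no bound on `k`. -/
def row (k : ℕ) : polygonOrder K n :=
  if h : k < n then single 0 ⟨k, h⟩ 1 (one_mem_xPow (cExp_nonpos (Fin.zero_le _)))
  else (X ^ 2 : K[X]) • single 0 0 1 (one_mem_xPow (cExp_nonpos le_rfl))

variable (K n) in
/-- The diagonal idempotent acting as a right identity on `row K n k`. -/
def idem (k : ℕ) : polygonOrder K n :=
  if h : k < n then single ⟨k, h⟩ ⟨k, h⟩ 1 (one_mem_xPow (cExp_nonpos le_rfl))
  else single 0 0 1 (one_mem_xPow (cExp_nonpos le_rfl))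

theorem coe_row (k : Fin n) :
    (row K n (k : ℕ) : Matrix (Fin n) (Fin n) (RatFunc K)) = Matrix.single 0 k 1 := by
  rw [row, dif_pos k.2, coe_single]

theorem coe_idem (k : Fin n) :
    (idem K n (k : ℕ) : Matrix (Fin n) (Fin n) (RatFunc K)) = Matrix.single k k 1 := by
  rw [idem, dif_pos k.2, coe_single]

theorem coe_row_zero :
    (row K n 0 : Matrix (Fin n) (Fin n) (RatFunc K)) = Matrix.single 0 0 1 := coe_row 0

theorem row_of_le {k : ℕ} (h : n ≤ k) : row K n k = (X ^ 2 : K[X]) • row K n 0 := by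
  rw [row, dif_neg h.not_gt, row, dif_pos (NeZero.pos n)]
  rfl

theorem idem_of_le {k : ℕ} (h : n ≤ k) : idem K n k = row K n 0 := by
  rw [idem, dif_neg h.not_gt, row, dif_pos (NeZero.pos n)]
  rfl

theorem row_zero_mul_row (k : ℕ) : row K n 0 * row K n k = row K n k := by
  have h (k : Fin n) : row K n 0 * row K n k = row K n k :=
    Subtype.ext (by
      rw [Subalgebra.coe_mul, coe_row_zero, coe_row, Matrix.single_mul_single_same, one_mul])
  rcases lt_or_ge k n with hk | hk
  · exact h ⟨k, hk⟩
  · rw [row_of_le hk, mul_smul_comm]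
    exact congrArg _ (h 0)

theorem row_mul_row_of_ne_zero {l : Fin n} (hl : l ≠ 0) (k : ℕ) :
    row K n (l : ℕ) * row K n k = (0 : polygonOrder K n) := by
  have h (k : Fin n) : row K n (l : ℕ) * row K n k = (0 : polygonOrder K n) :=
    Subtype.ext (by
      rw [Subalgebra.coe_mul, coe_row, coe_row, Matrix.single_mul_single_of_ne _ _ _ _ hl,
        Subalgebra.coe_zero])
  rcases lt_or_ge k n with hk | hk
  · exact h ⟨k, hk⟩
  · rw [row_of_le hk, mul_smul_comm, show row K n (l : ℕ) * row K n 0 = _ from h 0, smul_zero]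

theorem row_mul_idem (k : ℕ) : row K n k * idem K n k = row K n k := by
  rcases lt_or_ge k n with hk | hk
  · exact Subtype.ext (by
      rw [Subalgebra.coe_mul, coe_row ⟨k, hk⟩, coe_idem ⟨k, hk⟩, Matrix.single_mul_single_same,
        one_mul])
  · rw [row_of_le hk, idem_of_le hk, smul_mul_assoc, row_zero_mul_row]

theorem row_mul_idem_of_ne {k l : Fin n} (h : k ≠ l) :
    row K n (k : ℕ) * idem K n (l : ℕ) = (0 : polygonOrder K n) :=
  Subtype.ext (by
    rw [Subalgebra.coe_mul, coe_row, coe_idem, Matrix.single_mul_single_of_ne _ _ _ _ h,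
      Subalgebra.coe_zero])

theorem sum_idem : ∑ k : Fin n, idem K n (k : ℕ) = (1 : polygonOrder K n) := by
  apply Subtype.ext
  rw [AddSubmonoidClass.coe_finsetSum, Subalgebra.coe_one]
  simp only [coe_idem]
  ext i j
  simp [Matrix.sum_apply, Matrix.single_apply, Matrix.one_apply, ite_and]

theorem exists_row_succ_eq_row_mul (k : ℕ) :
    ∃ a : polygonOrder K n, row K n (k + 1) = row K n k * a := by
  rcases lt_trichotomy (k + 1) n with hk | hk | hk
  · refine ⟨single ⟨k, by omega⟩ ⟨k + 1, hk⟩ 1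
      (one_mem_xPow (cExp_nonpos (Fin.mk_le_mk.2 k.le_succ))), Subtype.ext ?_⟩
    rw [Subalgebra.coe_mul, coe_row ⟨k, by omega⟩, coe_row ⟨k + 1, hk⟩, coe_single,
      Matrix.single_mul_single_same, one_mul]
  · refine ⟨single ⟨k, by omega⟩ 0 (RatFunc.X ^ (2 : ℤ))
      (xPow_antitone (cExp_le_two n _ _) (zpow_mem_xPow 2)), Subtype.ext ?_⟩
    rw [row_of_le hk.ge, Subalgebra.coe_mul, coe_row ⟨k, by omega⟩, coe_single,
      Subalgebra.coe_smul, coe_row_zero, Matrix.single_mul_single_same, one_mul,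
      Matrix.smul_single, Algebra.smul_def]
    simp
  · exact ⟨row K n 0, by rw [row_of_le (n := n) (k := k) (by omega),
      row_of_le (n := n) (k := k + 1) (by omega), smul_mul_assoc, row_zero_mul_row]⟩

theorem exists_X_smul_row_eq_row_succ_mul (k : ℕ) :
    ∃ a : polygonOrder K n, (X : K[X]) • row K n k = row K n (k + 1) * a := by
  rcases lt_trichotomy (k + 1) n with hk | hk | hk
  · refine ⟨single ⟨k + 1, hk⟩ ⟨k, by omega⟩ (RatFunc.X ^ (1 : ℤ))
      (xPow_antitone (cExp_le_one le_rfl) (zpow_mem_xPow 1)), Subtype.ext ?_⟩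
    rw [Subalgebra.coe_mul, coe_row ⟨k + 1, hk⟩, coe_single, Subalgebra.coe_smul,
      coe_row ⟨k, by omega⟩, Matrix.single_mul_single_same, one_mul, Matrix.smul_single,
      Algebra.smul_def]
    simp
  · refine ⟨single 0 ⟨k, by omega⟩ (RatFunc.X ^ (-1 : ℤ)) (xPow_antitone ?_ (zpow_mem_xPow (-1))),
      Subtype.ext ?_⟩
    · simp [cExp, ← hk]
    · have hX : (RatFunc.X : RatFunc K) ^ 2 * RatFunc.X ^ (-1 : ℤ) = RatFunc.X := by
        rw [_root_.zpow_neg_one, sq, mul_inv_cancel_right₀ RatFunc.X_ne_zero]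
      rw [row_of_le hk.ge, smul_mul_assoc, Subalgebra.coe_smul, Subalgebra.coe_smul,
        Subalgebra.coe_mul, coe_row ⟨k, by omega⟩, coe_row_zero, coe_single,
        Matrix.single_mul_single_same, Matrix.smul_single, Matrix.smul_single,
        Algebra.smul_def, Algebra.smul_def, one_mul, map_pow, RatFunc.algebraMap_X, hX, mul_one]
  · exact ⟨(X : K[X]) • row K n 0, by rw [row_of_le (n := n) (k := k) (by omega),
      row_of_le (n := n) (k := k + 1) (by omega), smul_mul_assoc, mul_smul_comm,
      row_zero_mul_row, smul_comm]⟩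

theorem exists_X_sq_smul_idem_eq_mul_row (k : ℕ) :
    ∃ a : polygonOrder K n, (X ^ 2 : K[X]) • idem K n k = a * row K n k := by
  rcases lt_or_ge k n with hk | hk
  · refine ⟨single ⟨k, hk⟩ 0 (RatFunc.X ^ (2 : ℤ))
      (xPow_antitone (cExp_le_two n _ _) (zpow_mem_xPow 2)), Subtype.ext ?_⟩
    rw [Subalgebra.coe_mul, coe_row ⟨k, hk⟩, coe_single, Subalgebra.coe_smul,
      coe_idem ⟨k, hk⟩, Matrix.single_mul_single_same, mul_one, Matrix.smul_single,
      Algebra.smul_def]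
    simp
  · exact ⟨1, by rw [one_mul, row_of_le hk, idem_of_le hk]⟩

/-- The factor `X` clears the pole of the entry in position `(0, n - 1)`. -/
theorem exists_X_smul_row_mul_eq_sum (k : Fin n) (a : polygonOrder K n) : ∃ p : Fin n → K[X],
    (X : K[X]) • (row K n (k : ℕ) * a) = ∑ l : Fin n, p l • row K n (l : ℕ) := by
  have hentry (l : Fin n) : ∃ p : K[X], RatFunc.X * (a : Matrix _ _ (RatFunc K)) k l =
      algebraMap K[X] (RatFunc K) p := by
    have h := mul_mem_xPow (zpow_mem_xPow 1) (a.2 k l)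
    rw [zpow_one] at h
    exact mem_xPow_zero.1 (xPow_antitone (by linarith [neg_one_le_cExp n k l]) h)
  choose p hp using hentry
  refine ⟨p, Subtype.ext ?_⟩
  rw [AddSubmonoidClass.coe_finsetSum, Subalgebra.coe_smul, Subalgebra.coe_mul, coe_row]
  simp only [Subalgebra.coe_smul, coe_row, Matrix.smul_single]
  ext i j
  rw [Matrix.sum_apply, Matrix.smul_apply]
  simp only [Matrix.single_apply, ite_and, Algebra.smul_def, RatFunc.algebraMap_X]
  by_cases hi : 0 = i
  · subst hi
    simp [hp]
  · rw [Matrix.single_mul_apply_of_ne _ _ _ _ _ (Ne.symm hi)]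
    simp [hi]

end Order

end PolygonOrder

/-! ### Modules as chains of lattices -/

namespace PolygonOrder

section Chain

variable (K : Type) [Field K] (n : ℕ) [n.AtLeastTwo] (M : Type*) [AddCommGroup M] [Module K[X] M]
  [Module (polygonOrder K n) M] [IsScalarTower K[X] (polygonOrder K n) M]

/-- The descending chain of sublattices `row k • M`; all of them lie in the first coordinate
`chain K n M 0` of `M`, so a module is encoded by a chain of `K[x]`-lattices. -/
def chain (k : ℕ) : Submodule K[X] M :=
  LinearMap.range (Algebra.lsmul K[X] K[X] M (row K n k))

variable {K n M} {k : ℕ} {y : M}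

theorem mem_chain : y ∈ chain K n M k ↔ ∃ m : M, row K n k • m = y := Iff.rfl

theorem row_smul_mem_chain (k : ℕ) (m : M) : row K n k • m ∈ chain K n M k := ⟨m, rfl⟩

theorem chain_antitone : Antitone (chain K n M) := by
  refine antitone_nat_of_succ_le fun k => ?_
  rintro _ ⟨m, rfl⟩
  obtain ⟨a, ha⟩ := exists_row_succ_eq_row_mul (K := K) (n := n) k
  exact ⟨a • m, by rw [ha]; exact (mul_smul _ _ _).symm⟩

theorem X_smul_mem_chain_succ (hy : y ∈ chain K n M k) : (X : K[X]) • y ∈ chain K n M (k + 1) := by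
  obtain ⟨m, rfl⟩ := mem_chain.1 hy
  obtain ⟨a, ha⟩ := exists_X_smul_row_eq_row_succ_mul (K := K) (n := n) k
  exact mem_chain.2 ⟨a • m, by rw [← mul_smul, ← ha, smul_assoc]⟩

theorem mem_chain_of_le (hk : n ≤ k) :
    y ∈ chain K n M k ↔ ∃ z ∈ chain K n M 0, (X ^ 2 : K[X]) • z = y := by
  simp only [mem_chain, row_of_le hk, smul_assoc]
  exact ⟨fun ⟨m, hm⟩ => ⟨_, ⟨m, rfl⟩, hm⟩, fun ⟨_, ⟨m, hm⟩, hz⟩ => ⟨m, hm ▸ hz⟩⟩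

theorem X_sq_smul_mem_chain (k : ℕ) (hy : y ∈ chain K n M 0) :
    (X ^ 2 : K[X]) • y ∈ chain K n M k :=
  chain_antitone (le_max_left k n) ((mem_chain_of_le (le_max_right k n)).2 ⟨y, hy, rfl⟩)

theorem row_zero_smul_of_mem_chain_zero (hy : y ∈ chain K n M 0) : row K n 0 • y = y := by
  obtain ⟨m, rfl⟩ := mem_chain.1 hy
  rw [← mul_smul, row_zero_mul_row]

theorem row_smul_of_mem_chain_zero {k : Fin n} (hk : k ≠ 0) (hy : y ∈ chain K n M 0) :
    row K n k • y = 0 := by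
  obtain ⟨m, rfl⟩ := mem_chain.1 hy
  rw [← mul_smul, row_mul_row_of_ne_zero hk, zero_smul]

theorem exists_row_smul_eq (y : Fin n → M) (hy : ∀ k : Fin n, y k ∈ chain K n M k) :
    ∃ m : M, ∀ k : Fin n, row K n k • m = y k := by
  simp only [mem_chain] at hy
  choose z hz using hy
  refine ⟨∑ l : Fin n, idem K n l • z l, fun k => ?_⟩
  rw [Finset.smul_sum, Finset.sum_eq_single k, ← mul_smul, row_mul_idem, hz]
  · intro l _ hl
    rw [← mul_smul, row_mul_idem_of_ne hl.symm, zero_smul]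
  · simp

theorem idem_smul_eq_zero [NoZeroSMulDivisors K[X] M] {m : M} (h : row K n k • m = 0) :
    idem K n k • m = 0 := by
  obtain ⟨a, ha⟩ := exists_X_sq_smul_idem_eq_mul_row (K := K) (n := n) k
  have hX : (X ^ 2 : K[X]) • (idem K n k • m) = 0 := by
    rw [← smul_assoc, ha, mul_smul, h, smul_zero]
  exact (smul_eq_zero.1 hX).resolve_left (pow_ne_zero 2 X_ne_zero)

theorem eq_of_row_smul [NoZeroSMulDivisors K[X] M] {m m' : M}
    (h : ∀ k : Fin n, row K n k • m = row K n k • m') : m = m' := by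
  rw [← sub_eq_zero, ← one_smul (polygonOrder K n) (m - m'), ← sum_idem, Finset.sum_smul]
  exact Finset.sum_eq_zero fun k _ => idem_smul_eq_zero (by rw [smul_sub, h, sub_self])

end Chain

section ChainHom

variable {K : Type} [Field K] {n : ℕ} [n.AtLeastTwo]
  {L M N : Type*} [AddCommGroup L] [Module K[X] L] [Module (polygonOrder K n) L]
  [IsScalarTower K[X] (polygonOrder K n) L] [AddCommGroup M] [Module K[X] M]
  [Module (polygonOrder K n) M] [IsScalarTower K[X] (polygonOrder K n) M]
  [AddCommGroup N] [Module K[X] N] [Module (polygonOrder K n) N]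
  [IsScalarTower K[X] (polygonOrder K n) N] {k : ℕ}

theorem map_mem_chain (f : M →ₗ[polygonOrder K n] N) {y : M} (hy : y ∈ chain K n M k) :
    f y ∈ chain K n N k := by
  obtain ⟨m, rfl⟩ := mem_chain.1 hy
  exact mem_chain.2 ⟨f m, (map_smul _ _ _).symm⟩

theorem exists_mem_chain_eq {f : M →ₗ[polygonOrder K n] N} (hf : Function.Surjective f) {y : N}
    (hy : y ∈ chain K n N k) : ∃ x ∈ chain K n M k, f x = y := by
  obtain ⟨m, rfl⟩ := mem_chain.1 hy
  obtain ⟨x, rfl⟩ := hf m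
  exact ⟨row K n k • x, row_smul_mem_chain k x, map_smul _ _ _⟩

theorem mem_chain_of_map_mem_chain [NoZeroSMulDivisors K[X] N] {f : L →ₗ[polygonOrder K n] M}
    {g : M →ₗ[polygonOrder K n] N} (hf : Function.Injective f) (hfg : Function.Exact f g)
    {x : L} (hx : f x ∈ chain K n M k) : x ∈ chain K n L k := by
  obtain ⟨m, hm⟩ := mem_chain.1 hx
  have hgm : g (idem K n k • m) = 0 := by
    rw [map_smul]
    exact idem_smul_eq_zero (by rw [← map_smul, hm, hfg.apply_apply_eq_zero])
  obtain ⟨x', hx'⟩ := (hfg _).1 hgm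
  exact mem_chain.2 ⟨x', hf (by rw [map_smul, hx', ← mul_smul, row_mul_idem, hm])⟩

/-- A map of chains determines each coordinate of a `Λ`-linear map; compatibility with `Λ` holds
after multiplication by `X`, which is enough in a torsion-free module. -/
theorem exists_linearMap_eq_on_chain_zero [NoZeroSMulDivisors K[X] N] (φ : M →ₗ[K[X]] N)
    (hφ : ∀ k, ∀ y ∈ chain K n M k, φ y ∈ chain K n N k) :
    ∃ f : M →ₗ[polygonOrder K n] N, ∀ y ∈ chain K n M 0, f y = φ y := by
  have hex (m : M) : ∃ m' : N, ∀ k : Fin n, row K n k • m' = φ (row K n k • m) :=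
    exists_row_smul_eq _ fun k => hφ k _ (row_smul_mem_chain _ m)
  choose f hf using hex
  have map_add (m m' : M) : f (m + m') = f m + f m' :=
    eq_of_row_smul (K := K) (n := n) fun k => by rw [smul_add, hf, hf, hf, smul_add, map_add]
  have map_smul (a : polygonOrder K n) (m : M) : f (a • m) = a • f m := by
    refine eq_of_row_smul (K := K) (n := n) fun k => smul_right_injective N (X_ne_zero (R := K)) ?_
    obtain ⟨p, hp⟩ := exists_X_smul_row_mul_eq_sum k a
    calc (X : K[X]) • row K n k • f (a • m)
        = φ (((X : K[X]) • (row K n k * a)) • m) := by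
          rw [hf, ← map_smul, smul_assoc, mul_smul]
      _ = ∑ l : Fin n, (p l • row K n l) • f m := by
          simp only [hp, Finset.sum_smul, map_sum, smul_assoc, map_smul, hf]
      _ = (X : K[X]) • row K n k • a • f m := by
          rw [← Finset.sum_smul, ← hp, smul_assoc, mul_smul]
  refine ⟨{ toFun := f, map_add' := map_add, map_smul' := map_smul }, fun y hy => ?_⟩
  refine eq_of_row_smul (K := K) (n := n) fun k => (hf y k).trans ?_
  by_cases hk : k = 0
  · subst hk
    exact (congrArg φ (row_zero_smul_of_mem_chain_zero hy)).trans
      (row_zero_smul_of_mem_chain_zero (hφ 0 y hy)).symm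
  · rw [row_smul_of_mem_chain_zero hk hy, map_zero, row_smul_of_mem_chain_zero hk (hφ 0 y hy)]

end ChainHom

end PolygonOrder

/-! ### Lattices in the column space -/

namespace PolygonOrder

section Lattice

variable (K : Type) [Field K] {n : ℕ} [n.AtLeastTwo]

instance : IsScalarTower K[X] (polygonOrder K n) (Fin n → RatFunc K) :=
  ⟨fun p a v => Matrix.smul_mulVec p (a : Matrix (Fin n) (Fin n) (RatFunc K)) v⟩

instance : NoZeroSMulDivisors K[X] (Fin n → RatFunc K) where
  eq_zero_or_eq_zero_of_smul_eq_zero {p v} h := by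
    refine or_iff_not_imp_left.2 fun hp => funext fun k => ?_
    have hk := congrFun h k
    rw [Pi.smul_apply, Algebra.smul_def] at hk
    exact (mul_eq_zero.1 hk).resolve_left (RatFunc.algebraMap_ne_zero hp)

instance (N : Submodule (polygonOrder K n) (Fin n → RatFunc K)) : NoZeroSMulDivisors K[X] N :=
  Function.Injective.noZeroSMulDivisors (fun v => (v : Fin n → RatFunc K)) Subtype.val_injective
    rfl fun _ _ => rfl

variable {K} in
theorem smul_apply (a : polygonOrder K n) (v : Fin n → RatFunc K) (k : Fin n) :
    (a • v) k = ∑ l, (a : Matrix (Fin n) (Fin n) (RatFunc K)) k l * v l := rfl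

variable {K} in
theorem row_smul (k : Fin n) (v : Fin n → RatFunc K) : row K n k • v = Pi.single 0 (v k) := by
  funext l
  rw [smul_apply, coe_row]
  by_cases hl : l = 0
  · subst hl
    simp [Matrix.single_apply]
  · simp [Ne.symm hl, hl]

/-- The exponent vectors `d` for which the product of the fractional ideals `x^(d k) · K[x]` is
stable under the order. -/
def IsTiled (d : Fin n → ℤ) : Prop := ∀ i j, d i ≤ cExp n i j + d j

variable {d d₁ d₂ : Fin n → ℤ}

/-- The product of the fractional ideals `x^(d k) · K[x]` as a module over the order. -/
def lattice (d : Fin n → ℤ) (hd : IsTiled d) :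
    Submodule (polygonOrder K n) (Fin n → RatFunc K) where
  carrier := {v | ∀ k, v k ∈ xPow K (d k)}
  add_mem' hv hw k := (xPowSubmodule K (d k)).add_mem (hv k) (hw k)
  zero_mem' k := (xPowSubmodule K (d k)).zero_mem
  smul_mem' a v hv k := by
    rw [smul_apply]
    exact (xPowSubmodule K (d k)).sum_mem fun l _ =>
      xPow_antitone (hd k l) (mul_mem_xPow (a.2 k l) (hv l))

variable {K}

theorem mem_lattice {hd : IsTiled d} {v : Fin n → RatFunc K} :
    v ∈ lattice K d hd ↔ ∀ k, v k ∈ xPow K (d k) := Iff.rfl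

theorem single_mem_lattice (hd : IsTiled d) (k : Fin n) {f : RatFunc K}
    (hf : f ∈ xPow K (d k)) : Pi.single k f ∈ lattice K d hd := fun l => by
  by_cases h : l = k
  · subst h
    rwa [Pi.single_eq_same]
  · rw [Pi.single_eq_of_ne h]
    exact (xPowSubmodule K _).zero_mem

omit [n.AtLeastTwo] in
theorem IsTiled.sup (h₁ : IsTiled d₁) (h₂ : IsTiled d₂) : IsTiled (d₁ ⊔ d₂) := fun i j => by
  have := h₁ i j
  have := h₂ i j
  simp only [Pi.sup_apply]
  omega

omit [n.AtLeastTwo] in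
theorem IsTiled.inf (h₁ : IsTiled d₁) (h₂ : IsTiled d₂) : IsTiled (d₁ ⊓ d₂) := fun i j => by
  have := h₁ i j
  have := h₂ i j
  simp only [Pi.inf_apply]
  omega

omit [n.AtLeastTwo] in
theorem IsTiled.const_add (hd : IsTiled d) (c : ℤ) : IsTiled (fun k => c + d k) := fun i j => by
  have := hd i j
  dsimp only
  omega

theorem lattice_inf_lattice (h₁ : IsTiled d₁) (h₂ : IsTiled d₂) :
    lattice K d₁ h₁ ⊓ lattice K d₂ h₂ = lattice K (d₁ ⊔ d₂) (h₁.sup h₂) := by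
  ext v
  rw [Submodule.mem_inf, mem_lattice, mem_lattice, mem_lattice, ← forall_and]
  refine forall_congr' fun k => ⟨fun h => ?_, fun h =>
    ⟨xPow_antitone le_sup_left h, xPow_antitone le_sup_right h⟩⟩
  rcases le_total (d₁ k) (d₂ k) with hk | hk
  · rw [Pi.sup_apply, sup_of_le_right hk]
    exact h.2
  · rw [Pi.sup_apply, sup_of_le_left hk]
    exact h.1

theorem lattice_sup_lattice (h₁ : IsTiled d₁) (h₂ : IsTiled d₂) :
    lattice K d₁ h₁ ⊔ lattice K d₂ h₂ = lattice K (d₁ ⊓ d₂) (h₁.inf h₂) := by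
  refine le_antisymm (sup_le (fun v hv k => xPow_antitone inf_le_left (hv k))
    fun v hv k => xPow_antitone inf_le_right (hv k)) fun v hv => ?_
  rw [← Finset.univ_sum_single v]
  refine Submodule.sum_mem _ fun k _ => ?_
  have hk := hv k
  rcases le_total (d₁ k) (d₂ k) with hle | hle
  · rw [Pi.inf_apply, inf_of_le_left hle] at hk
    exact Submodule.mem_sup_left (single_mem_lattice h₁ k hk)
  · rw [Pi.inf_apply, inf_of_le_right hle] at hk
    exact Submodule.mem_sup_right (single_mem_lattice h₂ k hk)

/-- Multiplication by `x^c` as an isomorphism of lattices. -/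
def latticeShift (hd : IsTiled d) (c : ℤ) :
    lattice K d hd ≃ₗ[polygonOrder K n] lattice K _ (hd.const_add c) :=
  LinearEquiv.ofBijective
    { toFun := fun v => ⟨(RatFunc.X : RatFunc K) ^ c • v.1,
        fun k => zpow_mul_mem_xPow_iff.2 (v.2 k)⟩
      map_add' := fun _ _ => Subtype.ext (smul_add _ _ _)
      map_smul' := fun a v => Subtype.ext (Matrix.mulVec_smul a.1 _ v.1).symm }
    ⟨fun _ _ h => Subtype.ext (smul_right_injective _ (zpow_ne_zero c RatFunc.X_ne_zero)
        (congrArg Subtype.val h)), fun w => by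
      have hw : (RatFunc.X : RatFunc K) ^ c • (RatFunc.X : RatFunc K) ^ (-c) • w.1 = w.1 := by
        rw [smul_smul, ← zpow_add₀ RatFunc.X_ne_zero, add_neg_cancel, zpow_zero, one_smul]
      refine ⟨⟨(RatFunc.X : RatFunc K) ^ (-c) • w.1, fun k => ?_⟩, Subtype.ext hw⟩
      have hk := w.2 k
      rw [← hw] at hk
      exact zpow_mul_mem_xPow_iff.1 hk⟩

theorem exists_eq_smul_of_linearMap {hd : IsTiled d}
    (f : lattice K d hd →ₗ[polygonOrder K n] (Fin n → RatFunc K)) :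
    ∃ q : RatFunc K, ∀ v, f v = q • (v : Fin n → RatFunc K) := by
  set e : lattice K d hd :=
    ⟨Pi.single 0 (RatFunc.X ^ d 0), single_mem_lattice hd 0 (zpow_mem_xPow _)⟩ with he
  refine ⟨f e 0 * RatFunc.X ^ (-d 0), fun v => funext fun k => ?_⟩
  obtain ⟨p, hp⟩ : (v : Fin n → RatFunc K) k ∈ xPow K (d 0) := by
    simpa only [Submodule.coe_smul, row_smul, Pi.single_eq_same] using (row K n k • v).2 0
  have hrow : row K n k • v = p • e := Subtype.ext (by
    rw [Submodule.coe_smul, row_smul, Submodule.coe_smul_of_tower, he, ← Pi.single_smul, hp,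
      Algebra.smul_def, mul_comm])
  calc f v k = (row K n k • f v) 0 := by rw [row_smul, Pi.single_eq_same]
    _ = (p • f e) 0 := by rw [← map_smul, hrow, LinearMap.map_smul_of_tower]
    _ = f e 0 * (RatFunc.X ^ (-d 0) * (v : Fin n → RatFunc K) k) := by
      rw [hp, ← mul_assoc (RatFunc.X ^ (-d 0)), ← zpow_add₀ RatFunc.X_ne_zero, neg_add_cancel,
        zpow_zero, one_mul, Pi.smul_apply, Algebra.smul_def, mul_comm]
    _ = _ := (mul_assoc _ _ _).symm

theorem exists_mem_xPow_of_linearMap {hd₁ : IsTiled d₁} {hd₂ : IsTiled d₂}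
    (f : lattice K d₁ hd₁ →ₗ[polygonOrder K n] lattice K d₂ hd₂) :
    ∃ q : RatFunc K, (∀ k, q ∈ xPow K (d₂ k - d₁ k)) ∧
      ∀ v, (f v : Fin n → RatFunc K) = q • (v : Fin n → RatFunc K) := by
  obtain ⟨q, hq⟩ := exists_eq_smul_of_linearMap ((lattice K d₂ hd₂).subtype ∘ₗ f)
  refine ⟨q, fun k => ?_, hq⟩
  let v : lattice K d₁ hd₁ :=
    ⟨Pi.single k (RatFunc.X ^ d₁ k), single_mem_lattice hd₁ k (zpow_mem_xPow _)⟩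
  have h : q * RatFunc.X ^ d₁ k ∈ xPow K (d₂ k) := by
    have hv : (f v).1 k = q * v.1 k := congrFun (hq v) k
    rw [show v.1 k = RatFunc.X ^ d₁ k from Pi.single_eq_same k _] at hv
    exact hv ▸ (f v).2 k
  rw [mul_comm, ← add_sub_cancel (d₁ k) (d₂ k)] at h
  exact zpow_mul_mem_xPow_iff.1 h

/-- A section would consist of two scalars with sum `1`, both divisible by `X`. -/
theorem not_splitsExt_lattice {d e : Fin n → ℤ} {hd : IsTiled d} {he : IsTiled e}
    (h₁ : IsTiled d₁) (h₂ : IsTiled d₂) (hsup : d₁ ⊔ d₂ = d) (hinf : d₁ ⊓ d₂ = e) {k l : Fin n}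
    (hk : d₂ k < d₁ k) (hl : d₁ l < d₂ l) :
    ¬ SplitsExt (polygonOrder K n) (lattice K d hd) (lattice K e he) := by
  subst hsup hinf
  intro h
  rw [← lattice_inf_lattice h₁ h₂, ← lattice_sup_lattice h₁ h₂] at h
  have hadd := h.exists_add_eq
  rw [lattice_sup_lattice h₁ h₂] at hadd
  obtain ⟨s₁, s₂, hs⟩ := hadd
  obtain ⟨q₁, hq₁, hs₁⟩ := exists_mem_xPow_of_linearMap s₁
  obtain ⟨q₂, hq₂, hs₂⟩ := exists_mem_xPow_of_linearMap s₂
  have hsum : q₁ + q₂ = 1 := by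
    obtain ⟨v, hv₀⟩ : ∃ v : lattice K (d₁ ⊓ d₂) he, v.1 0 = RatFunc.X ^ (d₁ ⊓ d₂) 0 :=
      ⟨⟨Pi.single 0 _, single_mem_lattice _ 0 (zpow_mem_xPow _)⟩,
        by simp only [Pi.single_eq_same]⟩
    have hv := congrFun (hs v) 0
    rw [hs₁, hs₂, ← add_smul, Pi.smul_apply, smul_eq_mul, hv₀] at hv
    exact mul_right_cancel₀ (zpow_ne_zero _ RatFunc.X_ne_zero) (hv.trans (one_mul _).symm)
  refine one_notMem_xPow_one (K := K) (hsum ▸ (xPowSubmodule K 1).add_mem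
    (xPow_antitone ?_ (hq₁ k)) (xPow_antitone ?_ (hq₂ l)))
  · rw [Pi.inf_apply, inf_of_le_right hk.le]
    omega
  · rw [Pi.inf_apply, inf_of_le_left hl.le]
    omega

end Lattice

end PolygonOrder

/-! ### The modules attached to chords -/

/-- A side or diagonal of the convex `n`-gon, given by its pair of vertices in increasing order. -/
@[ext] structure Chord (n : ℕ) extends ℕ × ℕ where
  one_le_fst : 1 ≤ fst
  fst_lt_snd : fst < snd
  snd_le : snd ≤ n

namespace Chord

variable {n : ℕ}

/-- The exponent of `x` in coordinate `k` (counted from `0`) of the module attached to `p`. It is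
defined for all `k`, as are the members of `PolygonOrder.chain`. -/
def depth (p : Chord n) (k : ℕ) : ℕ := if k < p.fst then 0 else if k < p.snd then 1 else 2

theorem depth_zero (p : Chord n) : p.depth 0 = 0 := if_pos p.one_le_fst

theorem depth_of_le (p : Chord n) {k : ℕ} (hk : n ≤ k) : p.depth k = 2 := by
  have := p.fst_lt_snd
  have := p.snd_le
  unfold depth
  split_ifs <;> omega

theorem dExp_eq_depth (p : Chord n) (k : ℕ) : dExp p.fst p.snd k = p.depth k := by
  unfold dExp depth
  split_ifs <;> first | rfl | omega

theorem isTiled_depth (p : Chord n) : PolygonOrder.IsTiled fun k : Fin n => (p.depth k : ℤ) := by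
  intro i j
  have := p.one_le_fst
  have := p.fst_lt_snd
  have := p.snd_le
  unfold depth cExp
  push_cast
  split_ifs <;> omega

end Chord

theorem crossing_comm {p q : ℕ × ℕ} : Crossing p q ↔ Crossing q p := or_comm

theorem IsSide.not_crossing {n : ℕ} {p : ℕ × ℕ} (hp : IsSide n p) (q : Chord n) :
    ¬ Crossing p q.toProd := by
  have := q.one_le_fst
  have := q.snd_le
  unfold IsSide at hp
  unfold Crossing
  omega

theorem IsTriangulation.exists_chord {n : ℕ} {σ : Finset (ℕ × ℕ)} (hσ : IsTriangulation n σ) :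
    ∃ q : {p // p ∈ σ} → Chord n, Function.Injective q ∧
      Set.range (fun a => (q a).toProd) = σ :=
  ⟨fun p => ⟨p.1, (hσ.1 p.1 p.2).1, (hσ.1 p.1 p.2).2.1, (hσ.1 p.1 p.2).2.2⟩,
    fun _ _ h => Subtype.ext (congrArg Chord.toProd h), Subtype.range_coe⟩

namespace PolygonOrder

section ChordModule

variable (K : Type) [Field K] {n : ℕ} [n.AtLeastTwo] (p : Chord n)

/-- The module `(s, t)` attached to the chord `p` with vertices `s < t`. -/
abbrev chordModule : Submodule (polygonOrder K n) (Fin n → RatFunc K) :=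
  lattice K _ p.isTiled_depth

theorem coe_chordModule :
    (chordModule K p : Set (Fin n → RatFunc K)) = ijSet K n p.fst p.snd := by
  ext v
  exact forall_congr' fun k => by rw [p.dExp_eq_depth]

/-- The generator of `(s, t)`: the first standard basis vector. -/
def generator : chordModule K p :=
  ⟨Pi.single 0 1, single_mem_lattice p.isTiled_depth 0 (one_mem_xPow (by
    rw [Fin.val_zero, p.depth_zero, Nat.cast_zero]))⟩

/-- The entry in position `0` of an element of `(s, t)`, which is a polynomial. -/
def coord : chordModule K p →ₗ[K[X]] K[X] :=
  (LinearEquiv.ofInjective (Algebra.linearMap K[X] (RatFunc K))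
    (RatFunc.algebraMap_injective K)).symm ∘ₗ
  (LinearMap.proj 0 ∘ₗ (chordModule K p).subtype.restrictScalars K[X]).codRestrict
    (LinearMap.range (Algebra.linearMap K[X] (RatFunc K))) fun v => by
      have h : v.1 0 ∈ xPow K (p.depth (0 : Fin n) : ℤ) := v.2 0
      rw [Fin.val_zero, p.depth_zero, Nat.cast_zero] at h
      obtain ⟨c, hc⟩ := mem_xPow_zero.1 h
      exact ⟨c, hc.symm⟩

variable {K p}

theorem algebraMap_coord (v : chordModule K p) :
    algebraMap K[X] (RatFunc K) (coord K p v) = (v : Fin n → RatFunc K) 0 :=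
  congrArg Subtype.val ((LinearEquiv.ofInjective (Algebra.linearMap K[X] (RatFunc K))
    (RatFunc.algebraMap_injective K)).apply_symm_apply _)

theorem coord_generator : coord K p (generator K p) = 1 :=
  RatFunc.algebraMap_injective K (by
    rw [algebraMap_coord, generator, map_one]
    simp only [Pi.single_eq_same])

theorem coord_smul_generator (c : K[X]) : coord K p (c • generator K p) = c := by
  rw [map_smul, coord_generator, smul_eq_mul, mul_one]

instance : Nontrivial (chordModule K p) :=
  ⟨⟨generator K p, 0, fun h => one_ne_zero (α := K[X]) (by
    rw [← coord_generator (K := K) (p := p), h, map_zero])⟩⟩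

theorem coord_smul_generator_of_mem_chain_zero {y : chordModule K p}
    (hy : y ∈ chain K n (chordModule K p) 0) : coord K p y • generator K p = y := by
  refine Subtype.ext ?_
  conv_rhs => rw [← row_zero_smul_of_mem_chain_zero hy]
  rw [Submodule.coe_smul, Submodule.coe_smul_of_tower, generator, ← Pi.single_smul,
    Algebra.smul_def, algebraMap_coord, mul_one]
  exact (row_smul 0 _).symm

theorem smul_generator_mem_chain_iff_of_lt {c : K[X]} {k : ℕ} (hk : k < n) :
    c • generator K p ∈ chain K n (chordModule K p) k ↔ X ^ p.depth k ∣ c := by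
  lift k to Fin n using hk
  have hcoe : ((c • generator K p : chordModule K p) : Fin n → RatFunc K) =
      Pi.single 0 (algebraMap K[X] (RatFunc K) c) := by
    rw [Submodule.coe_smul_of_tower, generator, ← Pi.single_smul, Algebra.smul_def, mul_one]
  simp only [mem_chain, Subtype.ext_iff, Submodule.coe_smul, row_smul, hcoe,
    (Pi.single_injective _).eq_iff, ← algebraMap_mem_xPow_natCast]
  refine ⟨fun ⟨m, hm⟩ => hm ▸ m.2 k, fun h => ⟨⟨_, single_mem_lattice _ k h⟩, ?_⟩⟩
  simp only [Pi.single_eq_same]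

theorem smul_generator_mem_chain_zero (c : K[X]) :
    c • generator K p ∈ chain K n (chordModule K p) 0 := by
  rw [smul_generator_mem_chain_iff_of_lt (NeZero.pos n), p.depth_zero, pow_zero]
  exact one_dvd c

theorem smul_generator_mem_chain_iff {c : K[X]} {k : ℕ} :
    c • generator K p ∈ chain K n (chordModule K p) k ↔ X ^ p.depth k ∣ c := by
  rcases lt_or_ge k n with hk | hk
  · exact smul_generator_mem_chain_iff_of_lt hk
  · rw [mem_chain_of_le hk, p.depth_of_le hk]
    constructor
    · rintro ⟨z, -, hz⟩
      exact ⟨coord K p z, by rw [← smul_eq_mul, ← map_smul, hz, coord_smul_generator]⟩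
    · rintro ⟨d, rfl⟩
      exact ⟨d • generator K p, smul_generator_mem_chain_zero d, (mul_smul _ _ _).symm⟩

theorem pow_depth_dvd_coord {y : chordModule K p} {k : ℕ}
    (hy : y ∈ chain K n (chordModule K p) k) : X ^ p.depth k ∣ coord K p y := by
  rwa [← smul_generator_mem_chain_iff, coord_smul_generator_of_mem_chain_zero
    (chain_antitone k.zero_le hy)]

theorem generator_mem_chain_zero : generator K p ∈ chain K n (chordModule K p) 0 :=
  one_smul K[X] (generator K p) ▸ smul_generator_mem_chain_zero 1

variable {M : Type*} [AddCommGroup M] [Module K[X] M] [Module (polygonOrder K n) M]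
  [IsScalarTower K[X] (polygonOrder K n) M]

theorem linearMap_ext_generator [NoZeroSMulDivisors K[X] M]
    {f g : chordModule K p →ₗ[polygonOrder K n] M} (h : f (generator K p) = g (generator K p)) :
    f = g := by
  refine LinearMap.ext fun v => eq_of_row_smul (K := K) (n := n) fun k => ?_
  obtain ⟨c, hc⟩ : ∃ c : K[X], c • generator K p = row K n k • v :=
    ⟨_, coord_smul_generator_of_mem_chain_zero
      (chain_antitone (Nat.zero_le k) (row_smul_mem_chain k v))⟩
  rw [← map_smul, ← map_smul, ← hc, LinearMap.map_smul_of_tower, LinearMap.map_smul_of_tower, h]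

theorem pow_depth_smul_mem_chain {w : M} (hfst : w ∈ chain K n M (p.fst - 1))
    (hsnd : (X : K[X]) • w ∈ chain K n M (p.snd - 1)) (k : ℕ) :
    (X : K[X]) ^ p.depth k • w ∈ chain K n M k := by
  unfold Chord.depth
  split_ifs with h₁ h₂
  · rw [pow_zero, one_smul]
    exact chain_antitone (Nat.le_sub_one_of_lt h₁) hfst
  · rw [pow_one]
    exact chain_antitone (Nat.le_sub_one_of_lt h₂) hsnd
  · exact X_sq_smul_mem_chain k (chain_antitone (Nat.zero_le _) hfst)

theorem exists_linearMap_generator_eq [NoZeroSMulDivisors K[X] M] {w : M}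
    (hfst : w ∈ chain K n M (p.fst - 1)) (hsnd : (X : K[X]) • w ∈ chain K n M (p.snd - 1)) :
    ∃ f : chordModule K p →ₗ[polygonOrder K n] M, f (generator K p) = w := by
  have hchain : ∀ k, ∀ y ∈ chain K n (chordModule K p) k,
      (coord K p).smulRight w y ∈ chain K n M k := by
    intro k y hy
    obtain ⟨c, hc⟩ := pow_depth_dvd_coord hy
    rw [LinearMap.smulRight_apply, hc, mul_comm, mul_smul]
    exact Submodule.smul_mem _ c (pow_depth_smul_mem_chain hfst hsnd k)
  obtain ⟨f, hf⟩ := exists_linearMap_eq_on_chain_zero _ hchain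
  refine ⟨f, (hf _ generator_mem_chain_zero).trans ?_⟩
  rw [LinearMap.smulRight_apply, coord_generator, one_smul]

theorem exists_linearMap_eq_smul_generator {φ : M →ₗ[K[X]] K[X]}
    (hfst : ∀ y ∈ chain K n M p.fst, X ∣ φ y) (hsnd : ∀ y ∈ chain K n M p.snd, X ^ 2 ∣ φ y) :
    ∃ g : M →ₗ[polygonOrder K n] chordModule K p,
      ∀ y ∈ chain K n M 0, g y = φ y • generator K p := by
  refine exists_linearMap_eq_on_chain_zero (φ.smulRight (generator K p)) fun k y hy => ?_
  rw [LinearMap.smulRight_apply, smul_generator_mem_chain_iff]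
  unfold Chord.depth
  split_ifs with h₁ h₂
  · exact one_dvd _
  · rw [pow_one]
    exact hfst y (chain_antitone (not_lt.1 h₁) hy)
  · exact hsnd y (chain_antitone (not_lt.1 h₂) hy)

instance {d : Fin n → ℤ} (hd : IsTiled d) : Module.Finite K[X] (lattice K d hd) := by
  let f : (Fin n → K[X]) →ₗ[K[X]] lattice K d hd :=
    { toFun := fun c => ⟨fun k => RatFunc.X ^ d k * algebraMap K[X] (RatFunc K) (c k),
        fun k => ⟨c k, rfl⟩⟩
      map_add' := fun a b => Subtype.ext (funext fun k => by
        simp only [Pi.add_apply, map_add, mul_add, Submodule.coe_add])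
      map_smul' := fun r a => Subtype.ext (funext fun k => by
        change _ = r • (RatFunc.X ^ d k * algebraMap K[X] (RatFunc K) (a k))
        simp only [Pi.smul_apply, smul_eq_mul, map_mul, Algebra.smul_def, mul_left_comm]) }
  refine Module.Finite.of_surjective f fun v => ?_
  choose c hc using v.2
  exact ⟨c, Subtype.ext (funext fun k => (hc k).symm)⟩

theorem isCMMod_pi_chordModule {ι : Type} [Finite ι] (q : ι → Chord n) :
    IsCMMod (polygonOrder K n) (∀ a, chordModule K (q a)) :=
  isCMMod_iff.2 ⟨inferInstance, inferInstance⟩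

end ChordModule

end PolygonOrder

/-! ### Decomposition of Cohen–Macaulay modules -/

namespace PolygonOrder

section Decomposition

variable {K : Type} [Field K] {n : ℕ} [n.AtLeastTwo]

section Summand

variable {M : Type} [AddCommGroup M] [Module K[X] M] [Module (polygonOrder K n) M]
  [IsScalarTower K[X] (polygonOrder K n) M] [NoZeroSMulDivisors K[X] M] [Module.Finite K[X] M]
  [Nontrivial M]

variable (K n M) in
theorem exists_X_smul_notMem_chain :
    ∃ z ∈ chain K n M 0, (X : K[X]) • z ∉ chain K n M n := by
  obtain ⟨m, hm⟩ := exists_ne (0 : M)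
  obtain ⟨k, hk⟩ : ∃ k : Fin n, row K n k • m ≠ 0 := by
    by_contra! h
    exact hm (eq_of_row_smul (K := K) (n := n) fun k => (h k).trans (smul_zero _).symm)
  have : Nontrivial (chain K n M 0) := ⟨⟨_, chain_antitone (Nat.zero_le k)
    (row_smul_mem_chain (k : ℕ) m)⟩, 0, fun h => hk (congrArg Subtype.val h)⟩
  let b := Module.Free.chooseBasis K[X] (chain K n M 0)
  obtain ⟨i⟩ := b.index_nonempty
  refine ⟨b i, (b i).2, fun h => ?_⟩
  obtain ⟨z, hz, hzb⟩ := (mem_chain_of_le le_rfl).1 h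
  have hbz : b i = (X : K[X]) • ⟨z, hz⟩ :=
    Subtype.ext (smul_right_injective M (X_ne_zero (R := K)) (by
      rw [sq, mul_smul] at hzb
      exact hzb.symm))
  have hX : (X : K[X]) ∣ 1 := ⟨b.repr ⟨z, hz⟩ i, by
    rw [← smul_eq_mul, ← Finsupp.smul_apply, ← map_smul, ← hbz, b.repr_self,
      Finsupp.single_eq_same]⟩
  exact not_isUnit_X (isUnit_of_dvd_one hX)

variable (K n M) in
/-- The vertices of the chord are the places where the two filtrations `chain k` and
`X • chain k` jump. -/
theorem exists_chord_forall_notMem_chain :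
    ∃ (p : Chord n) (w : M), w ∈ chain K n M (p.fst - 1) ∧
      (X : K[X]) • w ∈ chain K n M (p.snd - 1) ∧
      ∀ y ∈ chain K n M p.fst, (X : K[X]) • w - (X : K[X]) • y ∉ chain K n M p.snd := by
  obtain ⟨j, hj, z, hz, hzj⟩ := Nat.exists_not_and_succ_of_not_zero_of_exists
    (p := fun j => ∃ z ∈ chain K n M 0, (X : K[X]) • z ∉ chain K n M j)
    (by rintro ⟨z, hz, hXz⟩; exact hXz (Submodule.smul_mem _ _ hz))
    ⟨n, exists_X_smul_notMem_chain K n M⟩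
  push Not at hj
  have hjn : j < n := by
    obtain ⟨z, hz, hzn⟩ := exists_X_smul_notMem_chain K n M
    exact lt_of_not_ge fun hnj => hzn (chain_antitone hnj (hj z hz))
  obtain ⟨i, hi, hi'⟩ := Nat.exists_not_and_succ_of_not_zero_of_exists
    (p := fun i => ∀ y ∈ chain K n M i, (X : K[X]) • z - (X : K[X]) • y ∉ chain K n M (j + 1))
    (fun h => h z hz (by rw [sub_self]; exact Submodule.zero_mem _))
    ⟨j, fun y hy h => hzj (by simpa using Submodule.add_mem _ h (X_smul_mem_chain_succ hy))⟩
  push Not at hi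
  obtain ⟨w, hw, hzw⟩ := hi
  have hij : i < j := lt_of_not_ge fun hji =>
    hzj (by simpa using Submodule.add_mem _ hzw (X_smul_mem_chain_succ (chain_antitone hji hw)))
  refine ⟨⟨(i + 1, j + 1), i.succ_pos, Nat.succ_lt_succ hij, hjn⟩, w, hw, ?_, fun y hy h => ?_⟩
  · simpa using Submodule.sub_mem _ (hj z hz) (chain_antitone j.le_succ hzw)
  · exact hi' y hy (by simpa using Submodule.add_mem _ hzw h)

variable (K n M) in
theorem exists_chord_functional :
    ∃ (p : Chord n) (φ : M →ₗ[K[X]] K[X]) (w : M), w ∈ chain K n M (p.fst - 1) ∧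
      (X : K[X]) • w ∈ chain K n M (p.snd - 1) ∧ φ w = 1 ∧
      (∀ y ∈ chain K n M p.fst, X ∣ φ y) ∧ ∀ y ∈ chain K n M p.snd, X ^ 2 ∣ φ y := by
  obtain ⟨p, w, hfst, hsnd, hw⟩ := exists_chord_forall_notMem_chain K n M
  have mem_zero {k : ℕ} {y : M} (hy : y ∈ chain K n M k) : y ∈ chain K n M 0 :=
    chain_antitone k.zero_le hy
  obtain ⟨φ, a, u, h_one, h_dvd⟩ := exists_functional_pow_dvd (e := 1)
    (Module.Free.chooseBasis K[X] (chain K n M 0)) prime_X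
    (S := (chain K n M p.snd ⊔ (chain K n M p.fst).map (LinearMap.lsmul K[X] M X)).comap
      (chain K n M 0).subtype)
    (fun v => Submodule.mem_sup_left (X_sq_smul_mem_chain p.snd v.2))
    (w := ⟨w, mem_zero hfst⟩) (by
      rw [pow_one, Submodule.mem_comap, Submodule.mem_sup]
      rintro ⟨s, hs, _, ⟨y, hy, rfl⟩, hsy⟩
      exact hw y hy (eq_sub_of_add_eq hsy ▸ hs))
  let π : M →ₗ[K[X]] chain K n M 0 :=
    (Algebra.lsmul K[X] K[X] M (row K n 0)).rangeRestrict
  have hπ (y : chain K n M 0) : π y = y := Subtype.ext (row_zero_smul_of_mem_chain_zero y.2)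
  have hu (k : ℕ) : (X ^ 2 : K[X]) • (u : M) ∈ chain K n M k := X_sq_smul_mem_chain k u.2
  refine ⟨p, φ ∘ₗ π, a • w + (X ^ 2 : K[X]) • (u : M), ?_, ?_, ?_, fun y hy => ?_, fun y hy => ?_⟩
  · exact Submodule.add_mem _ (Submodule.smul_mem _ a hfst) (hu _)
  · rw [smul_add, smul_comm]
    exact Submodule.add_mem _ (Submodule.smul_mem _ a hsnd) (Submodule.smul_mem _ X (hu _))
  · exact (congrArg φ (hπ (a • ⟨w, mem_zero hfst⟩ + (X ^ 2 : K[X]) • u))).trans h_one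
  · have h := h_dvd ((X : K[X]) • ⟨y, mem_zero hy⟩) (Submodule.mem_sup_right ⟨y, hy, rfl⟩)
    rw [map_smul, smul_eq_mul, sq, mul_dvd_mul_iff_left X_ne_zero] at h
    exact h.trans (congrArg φ (hπ ⟨y, mem_zero hy⟩)).symm.dvd
  · exact (h_dvd ⟨y, mem_zero hy⟩ (Submodule.mem_sup_left hy)).trans
      (congrArg φ (hπ ⟨y, mem_zero hy⟩)).symm.dvd

variable (K n M) in
theorem exists_isRetract_chordModule :
    ∃ p : Chord n, IsRetract (polygonOrder K n) (chordModule K p) M := by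
  obtain ⟨p, φ, w, hfst, hsnd, h_one, hφfst, hφsnd⟩ := exists_chord_functional K n M
  obtain ⟨f, hf⟩ := exists_linearMap_generator_eq hfst hsnd
  obtain ⟨g, hg⟩ := exists_linearMap_eq_smul_generator hφfst hφsnd
  have hw : w ∈ chain K n M 0 := chain_antitone (Nat.zero_le _) hfst
  have hgf : g (f (generator K p)) = generator K p := by rw [hf, hg w hw, h_one, one_smul]
  exact ⟨p, f, g, linearMap_ext_generator (M := chordModule K p) hgf⟩

end Summand

theorem exists_equiv_pi_chordModule {M : Type} [AddCommGroup M] [Module K[X] M]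
    [Module (polygonOrder K n) M] [IsScalarTower K[X] (polygonOrder K n) M]
    [NoZeroSMulDivisors K[X] M] [Module.Finite K[X] M] :
    ∃ (m : ℕ) (q : Fin m → Chord n),
      Nonempty (M ≃ₗ[polygonOrder K n] ∀ a, chordModule K (q a)) := by
  induction hr : Module.finrank K[X] M using Nat.strong_induction_on generalizing M with
  | _ r ih =>
  rcases subsingleton_or_nontrivial M with hM | hM
  · exact ⟨0, Fin.elim0, ⟨0, 0, fun _ => Subsingleton.elim _ _, fun _ => Subsingleton.elim _ _⟩⟩
  obtain ⟨p, hp⟩ := exists_isRetract_chordModule K n M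
  obtain ⟨π, ⟨e⟩⟩ := hp.exists_equiv_prod_ker
  have : NoZeroSMulDivisors K[X] (LinearMap.ker π) :=
    Subtype.val_injective.noZeroSMulDivisors Subtype.val rfl fun _ _ => rfl
  have : Module.Finite K[X] (LinearMap.ker π) :=
    .of_injective ((LinearMap.ker π).subtype.restrictScalars K[X]) Subtype.val_injective
  have hlt : Module.finrank K[X] (LinearMap.ker π) < r := by
    rw [← hr]
    exact finrank_lt_of_linearEquiv_prod (R := K[X]) (A := chordModule K p)
      (W := LinearMap.ker π) (e.restrictScalars K[X])
  obtain ⟨m, q, ⟨e'⟩⟩ := ih _ hlt (M := LinearMap.ker π) rfl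
  let q' : Fin (m + 1) → Chord n := Fin.cons p q
  exact ⟨m + 1, q', ⟨(e.trans ((LinearEquiv.refl _ _).prodCongr e')).trans
    (Fin.consLinearEquiv _ fun a => chordModule K (q' a))⟩⟩

end Decomposition

end PolygonOrder

/-! ### Extensions and crossings -/

namespace Chord

variable {n : ℕ}

theorem exists_depth_le_of_not_crossing {p q : Chord n} (h : ¬ Crossing p.toProd q.toProd) :
    (q.depth (p.snd - 1) ≤ q.depth p.fst ∨ q.depth (p.snd - 1) + 1 ≤ q.depth p.snd) ∨
      (q.depth (p.fst - 1) + 1 ≤ q.depth p.fst ∨ q.depth (p.fst - 1) + 2 ≤ q.depth p.snd) := by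
  have := p.one_le_fst
  have := p.fst_lt_snd
  have := q.one_le_fst
  have := q.fst_lt_snd
  unfold Crossing at h
  unfold depth
  split_ifs <;> omega

end Chord

namespace PolygonOrder

section ExactSequence

variable {K : Type} [Field K] {n : ℕ} [n.AtLeastTwo] {p : Chord n}

theorem exists_section_of_map_eq_generator {B : Type*} [AddCommGroup B] [Module K[X] B]
    [Module (polygonOrder K n) B] [IsScalarTower K[X] (polygonOrder K n) B]
    [NoZeroSMulDivisors K[X] B] {g : B →ₗ[polygonOrder K n] chordModule K p} {w : B}
    (hfst : w ∈ chain K n B (p.fst - 1)) (hsnd : (X : K[X]) • w ∈ chain K n B (p.snd - 1))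
    (hw : g w = generator K p) :
    ∃ s : chordModule K p →ₗ[polygonOrder K n] B, g ∘ₗ s = LinearMap.id := by
  obtain ⟨s, hs⟩ := exists_linearMap_generator_eq hfst hsnd
  exact ⟨s, linearMap_ext_generator (M := chordModule K p) (by
    rw [LinearMap.comp_apply, hs, hw, LinearMap.id_apply])⟩

theorem generator_mem_chain_fst_sub_one :
    generator K p ∈ chain K n (chordModule K p) (p.fst - 1) := by
  have hdepth : p.depth (p.fst - 1) = 0 := if_pos (Nat.sub_one_lt_of_lt p.one_le_fst)
  rw [← one_smul K[X] (generator K p), smul_generator_mem_chain_iff, hdepth, pow_zero]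

theorem X_smul_generator_mem_chain_snd_sub_one :
    (X : K[X]) • generator K p ∈ chain K n (chordModule K p) (p.snd - 1) := by
  have hdepth : p.depth (p.snd - 1) ≤ 1 := by
    have := p.fst_lt_snd
    unfold Chord.depth
    split_ifs <;> omega
  rw [smul_generator_mem_chain_iff]
  exact (pow_dvd_pow X hdepth).trans (pow_one X).dvd

/-- Lifting the two memberships that define a map out of `(s, t)` separately leaves an error
term in the kernel. -/
theorem exists_lift_generator {Z B : Type*} [AddCommGroup Z] [Module K[X] Z]
    [Module (polygonOrder K n) Z] [IsScalarTower K[X] (polygonOrder K n) Z] [AddCommGroup B]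
    [Module K[X] B] [Module (polygonOrder K n) B] [IsScalarTower K[X] (polygonOrder K n) B]
    {f : Z →ₗ[polygonOrder K n] B} {g : B →ₗ[polygonOrder K n] chordModule K p}
    (hf : Function.Injective f) (hg : Function.Surjective g) (hfg : Function.Exact f g) :
    ∃ w ∈ chain K n B (p.fst - 1), ∃ z ∈ chain K n Z p.fst, g w = generator K p ∧
      (X : K[X]) • z ∈ chain K n Z p.snd ∧
      (X : K[X]) • w - f z ∈ chain K n B (p.snd - 1) := by
  obtain ⟨w, hw, hgw⟩ := exists_mem_chain_eq (N := chordModule K p) hg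
    generator_mem_chain_fst_sub_one
  obtain ⟨y, hy, hgy⟩ := exists_mem_chain_eq (N := chordModule K p) hg
    X_smul_generator_mem_chain_snd_sub_one
  obtain ⟨z, hz⟩ := (hfg (X • w - y)).1 (by
    rw [map_sub, g.map_smul_of_tower (X : K[X]) w, hgw, hgy, sub_self])
  have hfst : p.fst - 1 + 1 = p.fst := Nat.sub_add_cancel p.one_le_fst
  have hsnd : p.snd - 1 + 1 = p.snd := Nat.sub_add_cancel (p.one_le_fst.trans p.fst_lt_snd.le)
  have hmem {k : ℕ} {x : Z} (hx : f x ∈ chain K n B k) : x ∈ chain K n Z k :=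
    mem_chain_of_map_mem_chain (N := chordModule K p) hf hfg hx
  refine ⟨w, hw, z, hmem ?_, hgw, hmem ?_, by rwa [hz, sub_sub_cancel]⟩
  · rw [hz]
    exact Submodule.sub_mem _ (hfst ▸ X_smul_mem_chain_succ hw)
      (chain_antitone (Nat.le_sub_one_of_lt p.fst_lt_snd) hy)
  · rw [LinearMap.map_smul_of_tower, hz, smul_sub, smul_smul, ← sq]
    exact Submodule.sub_mem _ (X_sq_smul_mem_chain _ (chain_antitone (Nat.zero_le _) hw))
      (hsnd ▸ X_smul_mem_chain_succ hy)

theorem splitsExt_chordModule {Z : Type} [AddCommGroup Z] [Module K[X] Z]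
    [Module (polygonOrder K n) Z] [IsScalarTower K[X] (polygonOrder K n) Z]
    [NoZeroSMulDivisors K[X] Z]
    (h : ∀ z ∈ chain K n Z p.fst, (X : K[X]) • z ∈ chain K n Z p.snd →
      ∃ a ∈ chain K n Z (p.fst - 1), ∃ b ∈ chain K n Z (p.snd - 1), z = (X : K[X]) • a + b) :
    SplitsExt (polygonOrder K n) Z (chordModule K p) := by
  intro B f g hf hg hfg
  have hexact : Function.Exact f g := LinearMap.exact_iff.2 hfg.symm
  let : Module K[X] B := Module.compHom B (algebraMap K[X] (polygonOrder K n))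
  have : IsScalarTower K[X] (polygonOrder K n) B := .of_algebraMap_smul fun _ _ => rfl
  have : NoZeroSMulDivisors K[X] B :=
    noZeroSMulDivisors_of_exact (W := chordModule K p) (f := f.restrictScalars K[X])
      (g := g.restrictScalars K[X]) hf hexact
  obtain ⟨w, hw, z, hz, hgw, hXz, hwz⟩ := exists_lift_generator hf hg hexact
  obtain ⟨a, ha, b, hb, rfl⟩ := h z hz hXz
  refine exists_section_of_map_eq_generator (w := w - f a)
    (Submodule.sub_mem _ hw (map_mem_chain (N := B) f ha)) ?_ ?_
  · have hsum : (X : K[X]) • (w - f a) =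
        (X : K[X]) • w - f ((X : K[X]) • a + b) + f b := by
      rw [map_add, f.map_smul_of_tower (X : K[X]) a, smul_sub]
      abel
    rw [hsum]
    exact Submodule.add_mem _ hwz (map_mem_chain (N := B) f hb)
  · calc g (w - f a) = g w - g (f a) := map_sub g w (f a)
      _ = generator K p - 0 := by rw [hgw, hexact.apply_apply_eq_zero]
      _ = generator K p := sub_zero (generator K p)

end ExactSequence

section Crossing

variable {K : Type} [Field K] {n : ℕ} [n.AtLeastTwo] {p q : Chord n}

theorem splitsExt_chordModule_of_not_crossing (h : ¬ Crossing p.toProd q.toProd) :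
    SplitsExt (polygonOrder K n) (chordModule K q) (chordModule K p) := by
  refine splitsExt_chordModule fun z hz hXz => ?_
  obtain ⟨c, rfl⟩ : ∃ c : K[X], c • generator K q = z :=
    ⟨_, coord_smul_generator_of_mem_chain_zero (chain_antitone (Nat.zero_le _) hz)⟩
  rw [smul_generator_mem_chain_iff] at hz
  rw [smul_smul, smul_generator_mem_chain_iff] at hXz
  have hdvd {e : ℕ} (he : e + 1 ≤ q.depth p.snd) : X ^ e ∣ c :=
    (mul_dvd_mul_iff_left X_ne_zero).1 (pow_succ' (X : K[X]) e ▸ (pow_dvd_pow X he).trans hXz)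
  rcases Chord.exists_depth_le_of_not_crossing h with hb | ha
  · refine ⟨0, Submodule.zero_mem _, c • generator K q, ?_, by rw [smul_zero, zero_add]⟩
    exact smul_generator_mem_chain_iff.2
      (hb.elim (fun he => (pow_dvd_pow X he).trans hz) hdvd)
  · obtain ⟨c, rfl⟩ : X ∣ c := by
      refine ha.elim (fun he => ?_) fun he => ?_
      · exact (dvd_pow_self X (by omega)).trans hz
      · exact (dvd_pow_self X (Nat.succ_ne_zero _)).trans (hdvd he)
    refine ⟨c • generator K q, smul_generator_mem_chain_iff.2 ?_, 0, Submodule.zero_mem _,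
      by rw [mul_smul, add_zero]⟩
    refine (mul_dvd_mul_iff_left X_ne_zero).1 (pow_succ' (X : K[X]) _ ▸ ?_)
    exact ha.elim (fun he => (pow_dvd_pow X he).trans hz) hdvd

/-- In either case the two lattices are `(i, k)` and a shift of `(j, l)`, or `(k, j)` and `(i, l)`:
pairs of opposite sides of the quadrilateral with diagonals `p = (i, j)` and `q = (k, l)`. -/
theorem not_splitsExt_chordModule_of_crossing (h : Crossing p.toProd q.toProd) :
    ¬ SplitsExt (polygonOrder K n) (chordModule K q) (chordModule K p) := by
  have := p.one_le_fst
  have := p.snd_le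
  have := q.one_le_fst
  have := q.snd_le
  rcases h with ⟨hik, hkj, hjl⟩ | ⟨hki, hil, hlj⟩
  · let r₁ : Chord n := ⟨(p.fst, q.fst), p.one_le_fst, hik, by omega⟩
    let r₂ : Chord n := ⟨(p.snd, q.snd), by omega, hjl, q.snd_le⟩
    refine fun hs => not_splitsExt_lattice (k := ⟨q.fst, by omega⟩) (l := 0)
      (hd := q.isTiled_depth.const_add 1) (he := p.isTiled_depth) r₁.isTiled_depth
      (r₂.isTiled_depth.const_add 1) ?_ ?_ ?_ ?_
      (hs.congr (latticeShift q.isTiled_depth 1) (.refl _ _))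
    · funext m
      simp only [Pi.sup_apply, Chord.depth, r₁, r₂]
      split_ifs <;> omega
    · funext m
      simp only [Pi.inf_apply, Chord.depth, r₁, r₂]
      split_ifs <;> omega
    · simp only [Chord.depth, r₁, r₂]
      split_ifs <;> omega
    · simp only [Fin.val_zero, Chord.depth_zero]
      decide
  · let r₁ : Chord n := ⟨(q.fst, p.snd), q.one_le_fst, by omega, p.snd_le⟩
    let r₂ : Chord n := ⟨(p.fst, q.snd), p.one_le_fst, hil, by omega⟩
    refine not_splitsExt_lattice (k := ⟨q.fst, by omega⟩) (l := ⟨q.snd, by omega⟩)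
      r₁.isTiled_depth r₂.isTiled_depth ?_ ?_ ?_ ?_
    · funext m
      simp only [Pi.sup_apply, Chord.depth, r₁, r₂]
      split_ifs <;> omega
    · funext m
      simp only [Pi.inf_apply, Chord.depth, r₁, r₂]
      split_ifs <;> omega
    all_goals
      simp only [Chord.depth, r₁, r₂]
      split_ifs <;> omega

theorem splitsExt_chordModule_iff :
    SplitsExt (polygonOrder K n) (chordModule K q) (chordModule K p) ↔
      ¬ Crossing p.toProd q.toProd :=
  ⟨fun h hpq => not_splitsExt_chordModule_of_crossing hpq h, splitsExt_chordModule_of_not_crossing⟩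

end Crossing

end PolygonOrder

/-! ### Uniqueness of the decomposition -/

namespace Chord

variable {n : ℕ}

theorem exists_depth_ne {p q : Chord n} (h : p ≠ q) : ∃ k, p.depth k ≠ q.depth k := by
  contrapose! h
  have hfst : p.fst = q.fst := by
    have hp := h p.fst
    have hq := h q.fst
    have := p.fst_lt_snd
    have := q.fst_lt_snd
    unfold depth at hp hq
    split_ifs at hp hq <;> omega
  have hsnd : p.snd = q.snd := by
    have hp := h p.snd
    have hq := h q.snd
    have := p.fst_lt_snd
    have := q.fst_lt_snd
    unfold depth at hp hq
    split_ifs at hp hq <;> omega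
  exact Chord.ext hfst hsnd

end Chord

namespace PolygonOrder

section Residue

variable {K : Type} [Field K] {n : ℕ} [n.AtLeastTwo] {p q r : Chord n}

/-- The scalar induced modulo `x` on position `0` by a homomorphism between the modules attached
to two chords. -/
def residue : (chordModule K p →ₗ[polygonOrder K n] chordModule K q) →+ K :=
  (constantCoeff : K[X] →+* K).toAddMonoidHom.comp
    ((coord K q).toAddMonoidHom.comp (LinearMap.evalAddMonoidHom (generator K p)))

theorem residue_apply (f : chordModule K p →ₗ[polygonOrder K n] chordModule K q) :
    residue f = constantCoeff (coord K q (f (generator K p))) := rfl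

theorem coord_smul_generator_map (f : chordModule K p →ₗ[polygonOrder K n] chordModule K q) :
    coord K q (f (generator K p)) • generator K q = f (generator K p) :=
  coord_smul_generator_of_mem_chain_zero
    (map_mem_chain (N := chordModule K q) f (generator_mem_chain_zero (K := K) (p := p)))

theorem residue_id : residue (LinearMap.id : chordModule K p →ₗ[polygonOrder K n] _) = 1 := by
  rw [residue_apply, LinearMap.id_apply, coord_generator, map_one]

theorem residue_comp (g : chordModule K q →ₗ[polygonOrder K n] chordModule K r)
    (f : chordModule K p →ₗ[polygonOrder K n] chordModule K q) :
    residue (g ∘ₗ f) = residue g * residue f := by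
  rw [residue_apply, LinearMap.comp_apply, ← coord_smul_generator_map,
    g.map_smul_of_tower (coord K q (f (generator K p))) (generator K q), map_smul, smul_eq_mul,
    map_mul, mul_comm, residue_apply, residue_apply]

theorem residue_eq_zero_of_depth_lt
    (f : chordModule K p →ₗ[polygonOrder K n] chordModule K q) {k : ℕ}
    (h : p.depth k < q.depth k) : residue f = 0 := by
  have hdvd : X ^ q.depth k ∣ X ^ p.depth k * coord K q (f (generator K p)) := by
    rw [← smul_generator_mem_chain_iff (p := q), mul_smul, coord_smul_generator_map,
      ← f.map_smul_of_tower]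
    exact map_mem_chain (N := chordModule K q) f
      (smul_generator_mem_chain_iff (K := K) (p := p).2 dvd_rfl)
  have hX : X ∣ coord K q (f (generator K p)) :=
    (mul_dvd_mul_iff_left (pow_ne_zero (p.depth k) X_ne_zero)).1
      (pow_succ (X : K[X]) _ ▸ (pow_dvd_pow X h).trans hdvd)
  rw [residue_apply, constantCoeff_apply]
  exact X_dvd_iff.1 hX

theorem residue_mul_residue_eq_zero (h : p ≠ q)
    (g : chordModule K q →ₗ[polygonOrder K n] chordModule K p)
    (f : chordModule K p →ₗ[polygonOrder K n] chordModule K q) : residue g * residue f = 0 := by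
  obtain ⟨k, hk⟩ := Chord.exists_depth_ne h
  rcases hk.lt_or_gt with hlt | hlt
  · rw [residue_eq_zero_of_depth_lt f hlt, mul_zero]
  · rw [residue_eq_zero_of_depth_lt g hlt, zero_mul]

/-- Taking residues turns the identity of the left-hand side into a factorisation of the identity
matrix over `K` through the copies of `(s, t)` on the right-hand side. -/
theorem card_le_of_isRetract {ι κ : Type*} [Finite ι] [Finite κ] {q : ι → Chord n}
    (h : IsRetract (polygonOrder K n) (κ → chordModule K p) (∀ a, chordModule K (q a))) :
    Nat.card κ ≤ Nat.card {a // q a = p} := by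
  classical
  cases nonempty_fintype ι
  cases nonempty_fintype κ
  obtain ⟨f, g, hgf⟩ := h.exists_sum_comp_eq
  let C : Matrix {a // q a = p} κ K := .of fun a l => residue (f a l)
  let D : Matrix κ {a // q a = p} K := .of fun k a => residue (g a k)
  have hDC : D * C = 1 := by
    ext k l
    have hne (a : ι) : residue (g a k) * residue (f a l) ≠ 0 → q a = p := fun ha => by
      by_contra hqp
      exact ha (residue_mul_residue_eq_zero (Ne.symm hqp) _ _)
    calc (D * C) k l = ∑ a : {a // q a = p}, residue (g a k) * residue (f a l) := Matrix.mul_apply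
      _ = ∑ a, residue (g a k) * residue (f a l) := by
          rw [← Finset.sum_filter_of_ne fun a _ => hne a]
          exact (Finset.sum_subtype _ (by simp) fun a => residue (g a k) * residue (f a l)).symm
      _ = residue (∑ a, g a k ∘ₗ f a l) := by simp only [map_sum, residue_comp]
      _ = (1 : Matrix κ κ K) k l := by
          rw [hgf, apply_ite residue, residue_id, map_zero, Matrix.one_apply]
  calc Nat.card κ = (D * C).rank := by rw [hDC, Matrix.rank_one, Nat.card_eq_fintype_card]
    _ ≤ C.rank := Matrix.rank_mul_le_right D C
    _ ≤ Nat.card {a // q a = p} := Nat.card_eq_fintype_card (α := {a // q a = p}) ▸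
        C.rank_le_card_height

theorem exists_eq_of_isRetract {ι : Type*} [Finite ι] {q : ι → Chord n}
    (h : IsRetract (polygonOrder K n) (chordModule K p) (∀ a, chordModule K (q a))) :
    ∃ a, q a = p := by
  have hcard := card_le_of_isRetract (κ := Unit) ((IsRetract.of_linearEquiv
    (LinearEquiv.funUnique Unit (polygonOrder K n) (chordModule K p))).trans h)
  rw [Nat.card_unique] at hcard
  obtain ⟨⟨a, ha⟩⟩ := (Nat.card_pos_iff.1 hcard).1
  exact ⟨a, ha⟩

end Residue

end PolygonOrder

/-! ### Cluster tilting modules -/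

namespace PolygonOrder

section Classification

variable {K : Type} [Field K] {n : ℕ} [n.AtLeastTwo] {ι : Type} [Finite ι]

theorem _root_.IsCMMod.exists_isRetract_chordModule {M : Type} [AddCommGroup M]
    [Module (polygonOrder K n) M] [Nontrivial M] (hM : IsCMMod (polygonOrder K n) M) :
    ∃ p : Chord n, IsRetract (polygonOrder K n) (chordModule K p) M := by
  let : Module K[X] M := Module.compHom M (algebraMap K[X] (polygonOrder K n))
  have : IsScalarTower K[X] (polygonOrder K n) M := .of_algebraMap_smul fun _ _ => rfl
  obtain ⟨_, _⟩ := isCMMod_iff.1 hM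
  exact PolygonOrder.exists_isRetract_chordModule K n M

theorem _root_.IsCMMod.exists_equiv_pi_chordModule {M : Type} [AddCommGroup M]
    [Module (polygonOrder K n) M] (hM : IsCMMod (polygonOrder K n) M) :
    ∃ (m : ℕ) (q : Fin m → Chord n),
      Nonempty (M ≃ₗ[polygonOrder K n] ∀ a, chordModule K (q a)) := by
  let : Module K[X] M := Module.compHom M (algebraMap K[X] (polygonOrder K n))
  have : IsScalarTower K[X] (polygonOrder K n) M := .of_algebraMap_smul fun _ _ => rfl
  obtain ⟨_, _⟩ := isCMMod_iff.1 hM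
  exact PolygonOrder.exists_equiv_pi_chordModule

theorem isBasic_pi_chordModule_iff {q : ι → Chord n} :
    IsBasic (polygonOrder K n) (∀ a, chordModule K (q a)) ↔ Function.Injective q := by
  rw [isBasic_iff_isRetract]
  constructor
  · intro h a b hab
    by_contra hne
    exact h (ModuleCat.of (polygonOrder K n) (chordModule K (q a))) inferInstance
      (.prod_self_of_ne (P := fun a => chordModule K (q a)) hne (.ofEq _ _ (by rw [hab])))
  · intro hq A _ hA
    obtain ⟨p, hp⟩ := ((isCMMod_pi_chordModule q).of_isRetract
      (IsRetract.fst.trans hA)).exists_isRetract_chordModule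
    have hpair : IsRetract (polygonOrder K n) (Fin 2 → chordModule K p)
        (∀ a, chordModule K (q a)) :=
      ((IsRetract.pi fun _ => hp).trans
        (.of_linearEquiv (LinearEquiv.finTwoArrow (polygonOrder K n) A))).trans hA
    have htwo := card_le_of_isRetract hpair
    have hone : Subsingleton {a // q a = p} :=
      ⟨fun a b => Subtype.ext (hq (a.2.trans b.2.symm))⟩
    have := Finite.card_le_one_iff_subsingleton.2 hone
    rw [Nat.card_eq_fintype_card, Fintype.card_fin] at htwo
    omega

theorem inAdd_chordModule_iff {q : ι → Chord n} {p : Chord n} :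
    InAdd (polygonOrder K n) (∀ a, chordModule K (q a)) (chordModule K p) ↔ p ∈ Set.range q := by
  rw [inAdd_iff_isRetract]
  constructor
  · rintro ⟨m, hm⟩
    obtain ⟨x, hx⟩ := exists_eq_of_isRetract (hm.trans (.of_linearEquiv
      (LinearEquiv.piCurry (polygonOrder K n) fun (_ : Fin m) a => chordModule K (q a)).symm))
    exact ⟨x.2, hx⟩
  · rintro ⟨a, rfl⟩
    exact ⟨1, (IsRetract.eval (P := fun a => chordModule K (q a)) a).trans (.of_linearEquiv
      (LinearEquiv.funUnique (Fin 1) (polygonOrder K n) _).symm)⟩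

theorem isClusterTilting_pi_chordModule_iff {q : ι → Chord n} :
    IsClusterTilting (polygonOrder K n) (∀ a, chordModule K (q a)) ↔
      ∀ p, p ∈ Set.range q ↔ ∀ a, ¬ Crossing p.toProd (q a).toProd := by
  have hleft (p : Chord n) :
      SplitsExt (polygonOrder K n) (chordModule K p) (∀ a, chordModule K (q a)) ↔
        ∀ a, ¬ Crossing p.toProd (q a).toProd :=
    splitsExt_pi_right_iff.trans (forall_congr' fun a =>
      splitsExt_chordModule_iff.trans (not_congr crossing_comm))
  have hright (p : Chord n) :
      SplitsExt (polygonOrder K n) (∀ a, chordModule K (q a)) (chordModule K p) ↔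
        ∀ a, ¬ Crossing p.toProd (q a).toProd :=
    splitsExt_pi_left_iff.trans (forall_congr' fun a => splitsExt_chordModule_iff)
  constructor
  · intro h p
    have hp : IsCMMod (polygonOrder K n) (chordModule K p) :=
      isCMMod_iff.2 ⟨inferInstance, inferInstance⟩
    exact inAdd_chordModule_iff.symm.trans
      ((h.2 (ModuleCat.of (polygonOrder K n) (chordModule K p)) hp).1.trans (hleft p))
  · refine fun h => ⟨isCMMod_pi_chordModule q, fun Z hZ => ?_⟩
    obtain ⟨m, r, ⟨e⟩⟩ := hZ.exists_equiv_pi_chordModule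
    have hadd : InAdd (polygonOrder K n) (∀ a, chordModule K (q a)) Z ↔
        ∀ b a, ¬ Crossing (r b).toProd (q a).toProd := by
      have hr : InAdd (polygonOrder K n) (∀ a, chordModule K (q a)) (∀ b, chordModule K (r b)) ↔
          ∀ b a, ¬ Crossing (r b).toProd (q a).toProd :=
        inAdd_pi_iff.trans (forall_congr' fun b => inAdd_chordModule_iff.trans (h (r b)))
      exact ⟨fun hZ => hr.1 (hZ.of_isRetract (.of_linearEquiv e.symm)),
        fun hZ => (hr.2 hZ).of_isRetract (.of_linearEquiv e)⟩
    refine ⟨hadd.trans ?_, hadd.trans ?_⟩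
    · exact (forall_congr' fun b => (hleft (r b)).symm).trans (splitsExt_pi_left_iff.symm.trans
        ⟨fun hs => hs.congr e.symm (.refl _ _), fun hs => hs.congr e (.refl _ _)⟩)
    · exact (forall_congr' fun b => (hright (r b)).symm).trans (splitsExt_pi_right_iff.symm.trans
        ⟨fun hs => hs.congr (.refl _ _) e.symm, fun hs => hs.congr (.refl _ _) e⟩)

end Classification

end PolygonOrder

/-! ### Triangulations -/

namespace PolygonOrder

section Triangulation

variable {K : Type} [Field K] {n : ℕ} [n.AtLeastTwo] {σ τ : Finset (ℕ × ℕ)} {ι : Type}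

theorem isTriangulation_iff {q : ι → Chord n} (hq : Set.range (fun a => (q a).toProd) = σ) :
    IsTriangulation n σ ↔ ∀ p, p ∈ Set.range q ↔ ∀ a, ¬ Crossing p.toProd (q a).toProd := by
  have hσ {p : ℕ × ℕ} : p ∈ σ ↔ ∃ a, (q a).toProd = p := Set.ext_iff.1 hq.symm p
  constructor
  · rintro ⟨-, -, hcross, hmax⟩ p
    constructor
    · rintro ⟨b, rfl⟩ a
      exact hcross _ (hσ.2 ⟨b, rfl⟩) _ (hσ.2 ⟨a, rfl⟩)
    · intro hp
      obtain ⟨a, ha⟩ := hσ.1 (hmax p.toProd p.one_le_fst p.fst_lt_snd p.snd_le fun r hr => by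
        obtain ⟨a, rfl⟩ := hσ.1 hr
        exact hp a)
      exact ⟨a, Chord.ext (congrArg Prod.fst ha) (congrArg Prod.snd ha)⟩
  · intro h
    have hmem (p : Chord n) (hp : ∀ a, ¬ Crossing p.toProd (q a).toProd) : p.toProd ∈ σ := by
      obtain ⟨a, rfl⟩ := (h p).2 hp
      exact hσ.2 ⟨a, rfl⟩
    refine ⟨?_, fun p hp => ?_, ?_, fun p h₁ h₂ h₃ hp => ?_⟩
    · intro p hp
      obtain ⟨a, rfl⟩ := hσ.1 hp
      exact ⟨(q a).one_le_fst, (q a).fst_lt_snd, (q a).snd_le⟩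
    · have hn : 2 ≤ n := Nat.AtLeastTwo.prop
      have hchord : 1 ≤ p.1 ∧ p.1 < p.2 ∧ p.2 ≤ n := by
        unfold IsSide at hp
        omega
      exact hmem ⟨p, hchord.1, hchord.2.1, hchord.2.2⟩ fun a => hp.not_crossing (q a)
    · intro p hp r hr
      obtain ⟨b, rfl⟩ := hσ.1 hp
      obtain ⟨a, rfl⟩ := hσ.1 hr
      exact (h (q b)).1 ⟨b, rfl⟩ a
    · exact hmem ⟨p, h₁, h₂, h₃⟩ fun a => hp _ (hσ.2 ⟨a, rfl⟩)

theorem nonempty_tModOf_equiv {E : ℕ → ℕ → Submodule (polygonOrder K n) (Fin n → RatFunc K)}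
    (hE : ∀ i j : ℕ, 1 ≤ i → i < j → j ≤ n → (E i j : Set (Fin n → RatFunc K)) = ijSet K n i j)
    {q : ι → Chord n} (hinj : Function.Injective q)
    (hq : Set.range (fun a => (q a).toProd) = σ) :
    Nonempty (TModOf (polygonOrder K n) E σ ≃ₗ[polygonOrder K n] ∀ a, chordModule K (q a)) := by
  have hσ {p : ℕ × ℕ} : p ∈ σ ↔ ∃ a, (q a).toProd = p := Set.ext_iff.1 hq.symm p
  have hEq (p : Chord n) : E p.fst p.snd = chordModule K p := SetLike.coe_injective
    ((hE _ _ p.one_le_fst p.fst_lt_snd p.snd_le).trans (coe_chordModule K p).symm)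
  let index : ι ≃ {p // p ∈ σ} := .ofBijective (fun a => ⟨(q a).toProd, hσ.2 ⟨a, rfl⟩⟩)
    ⟨fun a b hab => hinj (Chord.ext (congrArg (·.1.1) hab) (congrArg (·.1.2) hab)),
      fun ⟨_, hp⟩ => (hσ.1 hp).imp fun _ ha => Subtype.ext ha⟩
  exact ⟨(LinearEquiv.piCongrLeft (polygonOrder K n)
      (fun p : {p // p ∈ σ} => E p.1.1 p.1.2) index).symm.trans
    (LinearEquiv.piCongrRight fun a => LinearEquiv.ofEq _ _ (hEq (q a)))⟩

theorem subset_of_tModOf_equiv {E : ℕ → ℕ → Submodule (polygonOrder K n) (Fin n → RatFunc K)}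
    (hE : ∀ i j : ℕ, 1 ≤ i → i < j → j ≤ n → (E i j : Set (Fin n → RatFunc K)) = ijSet K n i j)
    (hσ : IsTriangulation n σ) (hτ : IsTriangulation n τ)
    (e : TModOf (polygonOrder K n) E σ ≃ₗ[polygonOrder K n] TModOf (polygonOrder K n) E τ) :
    σ ⊆ τ := by
  obtain ⟨q, hqinj, hq⟩ := hσ.exists_chord
  obtain ⟨r, hrinj, hr⟩ := hτ.exists_chord
  obtain ⟨eq⟩ := nonempty_tModOf_equiv hE hqinj hq
  obtain ⟨er⟩ := nonempty_tModOf_equiv hE hrinj hr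
  rw [← Finset.coe_subset, ← hq, ← hr]
  rintro _ ⟨a, rfl⟩
  obtain ⟨b, hb⟩ := exists_eq_of_isRetract
    ((IsRetract.eval (P := fun a => chordModule K (q a)) a).trans
      (.of_linearEquiv ((eq.symm.trans e).trans er)))
  exact ⟨b, congrArg Chord.toProd hb⟩

end Triangulation

end PolygonOrder

/-- The assignment `σ ↦ T_σ` is a bijection between triangulations of the convex `n`-gon and
isomorphism classes of basic cluster tilting objects of `CM(Λ)`. -/
theorem statement10 (K : Type) [Field K] (n : ℕ) (hn : 3 ≤ n)
    (Λ : Subalgebra (Polynomial K) (Matrix (Fin n) (Fin n) (RatFunc K)))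
    (hΛ : (Λ : Set (Matrix (Fin n) (Fin n) (RatFunc K))) = lambdaCarrier K n)
    (E : ℕ → ℕ → Submodule ↥Λ (Fin n → RatFunc K))
    (hE : ∀ i j : ℕ, 1 ≤ i → i < j → j ≤ n →
      (E i j : Set (Fin n → RatFunc K)) = ijSet K n i j) :
    (∀ σ : Finset (ℕ × ℕ), IsTriangulation n σ →
      IsClusterTilting Λ (TModOf Λ E σ) ∧ IsBasic Λ (TModOf Λ E σ)) ∧
    (∀ σ τ : Finset (ℕ × ℕ), IsTriangulation n σ → IsTriangulation n τ →
      Nonempty ((TModOf Λ E σ) ≃ₗ[↥Λ] (TModOf Λ E τ)) → σ = τ) ∧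
    (∀ M : ModuleCat.{0} ↥Λ, IsClusterTilting Λ M → IsBasic Λ M →
      ∃ σ : Finset (ℕ × ℕ), IsTriangulation n σ ∧
        Nonempty (M ≃ₗ[↥Λ] (TModOf Λ E σ))) := by
  have : n.AtLeastTwo := ⟨by omega⟩
  obtain rfl : Λ = PolygonOrder.polygonOrder K n := SetLike.coe_injective hΛ
  refine ⟨fun σ hσ => ?_, fun σ τ hσ hτ ⟨e⟩ => ?_, fun M hM hbasic => ?_⟩
  · obtain ⟨q, hinj, hq⟩ := hσ.exists_chord
    obtain ⟨e⟩ := PolygonOrder.nonempty_tModOf_equiv hE hinj hq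
    exact ⟨(PolygonOrder.isClusterTilting_pi_chordModule_iff.2
        ((PolygonOrder.isTriangulation_iff hq).1 hσ)).congr e.symm,
      (PolygonOrder.isBasic_pi_chordModule_iff.2 hinj).congr e.symm⟩
  · exact (PolygonOrder.subset_of_tModOf_equiv hE hσ hτ e).antisymm
      (PolygonOrder.subset_of_tModOf_equiv hE hτ hσ e.symm)
  · obtain ⟨m, q, ⟨e⟩⟩ := hM.1.exists_equiv_pi_chordModule
    have hinj := PolygonOrder.isBasic_pi_chordModule_iff.1 (hbasic.congr e)
    have hq : Set.range (fun a => (q a).toProd) =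
        (Finset.univ.image fun a => (q a).toProd : Finset (ℕ × ℕ)) := by
      rw [Finset.coe_image, Finset.coe_univ, Set.image_univ]
    obtain ⟨e'⟩ := PolygonOrder.nonempty_tModOf_equiv hE hinj hq
    exact ⟨_, (PolygonOrder.isTriangulation_iff hq).2
      (PolygonOrder.isClusterTilting_pi_chordModule_iff.1 (hM.congr e)), ⟨e.trans e'.symm⟩⟩
end
end

section
/- Let G be the n×n matrix over K[x] with G_{1,n−1} = 1, G_{2,n} = 1, G_{i,i−2} = x² for 3 ≤ i ≤ n, and all other entries 0. Then: (a) conjugation λ ↦ G^{−1}·λ·G maps Λ bijectively onto Λ, defining a K[x]-algebra automorphism α of Λ; (b) there exists a K[x]-linear bijection Φ : Λ → Hom_{K[x]}(Λ, K[x]) satisfying Φ(a·µ·α(b)) = a·Φ(µ)·b for all a, b, µ ∈ Λ, where the Λ-bimodule structure on Hom_{K[x]}(Λ, K[x]) is given by (a·f·b)(m) := f(b·m·a). In other words, the twisted bimodule ₁Λ_α is isomorphic to Hom_{K[x]}(Λ, K[x]) as a Λ-bimodule. -/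
set_option synthInstance.maxHeartbeats 1000000
set_option maxHeartbeats 1000000

open Polynomial Matrix

noncomputable section

/-- The matrix `G` (with 0-based indices): `G_{0,n-2} = 1`, `G_{1,n-1} = 1`, and
`G_{i,i-2} = x²` for `2 ≤ i ≤ n-1`, all other entries being `0`.  (In the 1-based indexing of
the paper: `G_{1,n−1} = 1`, `G_{2,n} = 1`, `G_{i,i−2} = x²` for `3 ≤ i ≤ n`.) -/
def Gmat (K : Type*) [Field K] (n : ℕ) : Matrix (Fin n) (Fin n) (RatFunc K) :=
  Matrix.of fun i j =>
    if (i : ℕ) = 0 ∧ (j : ℕ) = n - 2 then 1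
    else if (i : ℕ) = 1 ∧ (j : ℕ) = n - 1 then 1
    else if 2 ≤ (i : ℕ) ∧ (j : ℕ) + 2 = (i : ℕ) then RatFunc.X ^ 2 else 0

/-!
Over `K(x)` the order `Λ` has the `K[x]`-basis `x ^ c i j • E i j`. Let `s` be the rotation
`j ↦ j + 2` of the indices. The exponents satisfy `c i j + c (s j) i = γ j` independently of `i`,
and `G` is the monomial matrix with entries `x ^ γ j` at `(s j, j)`. Hence for the form
`β u m = trace (u * G⁻¹ * m)` the dual of the basis vector with index `(i, j)` is the one with index
`(s j, i)`: the basis is its own `β`-dual up to a permutation, so `β` identifies `Λ` with its dual.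
Cyclicity of the trace gives `β (G⁻¹ * u * G) m = β m u`, so conjugation by `G` is the Nakayama
automorphism of `β`. As `Λ` is both its own left and its own right `β`-dual lattice, this
automorphism preserves `Λ`.
-/

section SelfDualLattice

variable {F M κ : Type*} [CommRing F] [AddCommGroup M] [Module F M] [DecidableEq κ]
  {b : Module.Basis κ F M} {β : LinearMap.BilinForm F M} {σ : Equiv.Perm κ}

/-- The basis `b` is its own `β`-dual basis up to the permutation `σ`. It makes the lattices
spanned by `b` self-dual for `β`, which need not be symmetric. -/
def IsPermDual (β : LinearMap.BilinForm F M) (b : Module.Basis κ F M) (σ : Equiv.Perm κ) : Prop :=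
  ∀ p q, β (b p) (b q) = if q = σ p then 1 else 0

namespace IsPermDual

theorem flip (h : IsPermDual β b σ) : IsPermDual (LinearMap.flip β) b σ.symm :=
  fun p q => by
    rw [LinearMap.flip_apply, h q p]
    simp only [Equiv.eq_symm_apply, eq_comm]

theorem repr_eq (h : IsPermDual β b σ) (x : M) (p : κ) : b.repr x p = β x (b (σ p)) := by
  suffices b.coord p = LinearMap.flip β (b (σ p)) from LinearMap.congr_fun this x
  refine b.ext fun q => ?_
  simp [h q (σ p), Finsupp.single_apply, eq_comm]

variable {R : Type*} [CommRing R] [IsDomain R] [Nontrivial F] [Algebra R F]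
  [Module.IsTorsionFree R F] [Module R M] [IsScalarTower R F M] [Finite κ]

theorem exists_dualEquiv (h : IsPermDual β b σ) {L : Submodule R M}
    (hL : L = Submodule.span R (Set.range b)) :
    ∃ Φ : L ≃ₗ[R] Module.Dual R L, ∀ x y : L, algebraMap R F (Φ x y) = β x y := by
  subst hL
  let c := b.restrictScalars R
  refine ⟨c.equiv c.dualBasis σ, fun x y => ?_⟩
  suffices (c.equiv c.dualBasis σ).toLinearMap.compr₂ (Algebra.linearMap R F) =
      (β.restrictScalars₁₂ R R).domRestrict₁₂ _ _ from LinearMap.congr_fun₂ this x y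
  refine LinearMap.ext_basis c c fun p q => ?_
  have hpq : c.equiv c.dualBasis σ (c p) (c q) = if q = σ p then 1 else 0 := by
    rw [Module.Basis.equiv_apply, Module.Basis.dualBasis_apply_self]
  have hc (p : κ) : (c p : M) = b p := b.restrictScalars_apply R p
  change algebraMap R F (c.equiv c.dualBasis σ (c p) (c q)) = β (c p) (c q)
  rw [hpq, hc, hc, h p q]
  split_ifs <;> simp only [map_one, map_zero]

theorem mem_span_iff (h : IsPermDual β b σ) (x : M) :
    x ∈ Submodule.span R (Set.range b) ↔
      ∀ y ∈ Submodule.span R (Set.range b), β x y ∈ Set.range (algebraMap R F) := by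
  refine ⟨fun hx y hy => ?_, fun hx => (b.mem_span_iff_repr_mem R x).2 fun p => ?_⟩
  · obtain ⟨Φ, hΦ⟩ := h.exists_dualEquiv (R := R) rfl
    exact ⟨Φ ⟨x, hx⟩ ⟨y, hy⟩, hΦ ⟨x, hx⟩ ⟨y, hy⟩⟩
  · rw [h.repr_eq]
    exact hx _ (Submodule.subset_span (Set.mem_range_self _))

theorem apply_mem_span_iff (h : IsPermDual β b σ) {ν : M → M}
    (hν : ∀ x y, β (ν x) y = β y x) (x : M) :
    ν x ∈ Submodule.span R (Set.range b) ↔ x ∈ Submodule.span R (Set.range b) := by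
  simp only [h.mem_span_iff (ν x), h.flip.mem_span_iff x, hν, LinearMap.flip_apply]

end IsPermDual

end SelfDualLattice

section RestrictSubalgebra

variable {R B : Type*} [CommSemiring R] [Semiring B] [Algebra R B] (ν : B ≃ₐ[R] B)
  {Λ : Subalgebra R B} (hν : ∀ x, ν x ∈ Λ ↔ x ∈ Λ)

/-- The restriction of an automorphism to a subalgebra which it maps onto itself. -/
def restrictSubalgebra : Λ ≃ₐ[R] Λ :=
  (ν.subalgebraMap Λ).trans <| Subalgebra.equivOfEq _ _ <| by
    ext y
    obtain ⟨x, rfl⟩ := ν.surjective y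
    exact (ν.injective.mem_set_image (s := (Λ : Set B))).trans (hν x).symm

theorem coe_restrictSubalgebra (u : Λ) : (restrictSubalgebra ν hν u : B) = ν u :=
  rfl

end RestrictSubalgebra

section TwistedForm

variable {R F B κ : Type*} [CommRing F] [Ring B] [Algebra F B]

/-- The bilinear form `(x, y) ↦ t (x * g⁻¹ * y)`. When `t` is a trace, conjugation by `g` is its
Nakayama automorphism. -/
def twistedForm (t : B →ₗ[F] F) (g : Bˣ) : LinearMap.BilinForm F B :=
  ((LinearMap.mul F B).compr₂ t) ∘ₗ LinearMap.mulRight F ↑g⁻¹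

theorem twistedForm_apply (t : B →ₗ[F] F) (g : Bˣ) (x y : B) :
    twistedForm t g x y = t (x * ↑g⁻¹ * y) :=
  rfl

variable {t : B →ₗ[F] F}

theorem twistedForm_mul_mul_conj (ht : ∀ x y, t (x * y) = t (y * x)) (g : Bˣ) (a b u m : B) :
    twistedForm t g (a * u * (↑g⁻¹ * b * g)) m = twistedForm t g u (b * m * a) := by
  have := ht a (u * ↑g⁻¹ * b * m)
  simpa [twistedForm_apply, mul_assoc] using this

theorem twistedForm_conj (ht : ∀ x y, t (x * y) = t (y * x)) (g : Bˣ) (x y : B) :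
    twistedForm t g (↑g⁻¹ * x * g) y = twistedForm t g y x := by
  have := ht (↑g⁻¹ * x) y
  simpa [twistedForm_apply, mul_assoc] using this

theorem exists_conj_algEquiv_and_twisted_dualEquiv [CommRing R] [IsDomain R] [Nontrivial F]
    [Algebra R F] [Module.IsTorsionFree R F] [Algebra R B] [IsScalarTower R F B] [Finite κ]
    [DecidableEq κ] (ht : ∀ x y, t (x * y) = t (y * x)) (g : Bˣ) {b : Module.Basis κ F B}
    {σ : Equiv.Perm κ} (h : IsPermDual (twistedForm t g) b σ) {Λ : Subalgebra R B}
    (hΛ : Subalgebra.toSubmodule Λ = Submodule.span R (Set.range b)) :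
    ∃ α : Λ ≃ₐ[R] Λ, (∀ u : Λ, (α u : B) = ↑g⁻¹ * u * g) ∧
      ∃ Φ : Λ ≃ₗ[R] Module.Dual R Λ, ∀ a b u m : Λ, Φ (a * u * α b) m = Φ u (b * m * a) := by
  let ν : B ≃ₐ[R] B := MulSemiringAction.toAlgEquiv R B (ConjAct.toConjAct g⁻¹)
  have hν (x : B) : ν x = ↑g⁻¹ * x * g := by simp [ν, ConjAct.units_smul_def]
  have hform (x y : B) : twistedForm t g (ν x) y = twistedForm t g y x := by
    rw [hν, twistedForm_conj ht]
  have hνΛ (x : B) : ν x ∈ Λ ↔ x ∈ Λ := by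
    simp only [← Subalgebra.mem_toSubmodule, hΛ, h.apply_mem_span_iff hform]
  have hα (u : Λ) : (restrictSubalgebra ν hνΛ u : B) = ↑g⁻¹ * u * g := by
    rw [coe_restrictSubalgebra, hν]
  obtain ⟨Φ, hΦ⟩ : ∃ Φ : Λ ≃ₗ[R] Module.Dual R Λ,
      ∀ x y : Λ, algebraMap R F (Φ x y) = twistedForm t g x y := h.exists_dualEquiv hΛ
  refine ⟨restrictSubalgebra ν hνΛ, hα, Φ, fun a b u m => FaithfulSMul.algebraMap_injective R F ?_⟩
  simp only [hΦ, Subalgebra.coe_mul, hα]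
  exact twistedForm_mul_mul_conj ht g _ _ _ _

end TwistedForm

section TiledOrder

variable {F ι : Type*} [CommRing F] [Fintype ι]

/-- The basis `d i j • E i j` of the matrix algebra, given by rescaled matrix units. Its span over a
subring is a tiled order when it is closed under multiplication. -/
def scaledMatrixUnits (d : ι → ι → Fˣ) : Module.Basis (ι × ι) F (Matrix ι ι F) :=
  (Matrix.stdBasis F ι ι).unitsSMul fun p => d p.1 p.2

theorem scaledMatrixUnits_apply [DecidableEq ι] (d : ι → ι → Fˣ) (p : ι × ι) :
    scaledMatrixUnits d p = Matrix.single p.1 p.2 (d p.1 p.2 : F) := by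
  obtain ⟨i, j⟩ := p
  simp [scaledMatrixUnits, Module.Basis.unitsSMul_apply, Matrix.stdBasis_eq_single,
    Units.smul_def, Matrix.smul_single]

theorem scaledMatrixUnits_repr (d : ι → ι → Fˣ) (M : Matrix ι ι F) (i j : ι) :
    (scaledMatrixUnits d).repr M (i, j) = ↑(d i j)⁻¹ * M i j := by
  rw [scaledMatrixUnits, Module.Basis.repr_unitsSMul, Units.smul_def, smul_eq_mul]
  rfl

theorem mem_span_scaledMatrixUnits_iff {R : Type*} [CommRing R] [IsDomain R] [Nontrivial F]
    [Algebra R F] [Module.IsTorsionFree R F] (d : ι → ι → Fˣ) (M : Matrix ι ι F) :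
    M ∈ Submodule.span R (Set.range (scaledMatrixUnits d)) ↔
      ∀ i j, M i j ∈ Submodule.span R {(d i j : F)} := by
  simp only [Module.Basis.mem_span_iff_repr_mem, Prod.forall, scaledMatrixUnits_repr,
    Submodule.mem_span_singleton, Set.mem_range, Algebra.smul_def, Units.eq_inv_mul_iff_mul_eq]
  simp only [mul_comm]

variable [DecidableEq ι]

/-- The invertible monomial matrix sending the `j`-th basis vector to `γ j` times the `s j`-th. -/
def monomialGL (s : Equiv.Perm ι) (γ : ι → Fˣ) : GL ι F :=
  Units.mkOfMulEqOne (Matrix.of fun i j => if i = s j then (γ j : F) else 0)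
    (Matrix.of fun i j => if j = s i then (↑(γ i)⁻¹ : F) else 0) <| by
      ext i j
      rcases eq_or_ne i j with rfl | hij
      · simp [Matrix.mul_apply, ← Equiv.symm_apply_eq]
      · simp [Matrix.mul_apply, ← Equiv.symm_apply_eq, hij]

theorem monomialGL_apply (s : Equiv.Perm ι) (γ : ι → Fˣ) (i j : ι) :
    (monomialGL s γ : Matrix ι ι F) i j = if i = s j then (γ j : F) else 0 :=
  rfl

theorem monomialGL_inv_apply (s : Equiv.Perm ι) (γ : ι → Fˣ) (i j : ι) :
    (↑(monomialGL s γ)⁻¹ : Matrix ι ι F) i j = if j = s i then (↑(γ i)⁻¹ : F) else 0 :=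
  rfl

theorem isPermDual_scaledMatrixUnits {d : ι → ι → Fˣ} {s : Equiv.Perm ι} {γ : ι → Fˣ}
    (hd : ∀ i j, d i j * d (s j) i = γ j) :
    IsPermDual (twistedForm (Matrix.traceLinearMap ι F F) (monomialGL s γ)) (scaledMatrixUnits d)
      ((Equiv.prodComm ι ι).trans (s.prodCongr (Equiv.refl ι))) := by
  rintro ⟨i, j⟩ ⟨k, l⟩
  simp only [twistedForm_apply, scaledMatrixUnits_apply, Matrix.single_mul_mul_single,
    Matrix.traceLinearMap_apply, monomialGL_inv_apply]
  by_cases hl : l = i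
  · subst hl
    by_cases hk : k = s j
    · subst hk
      have : (↑(d l j * (γ j)⁻¹ * d (s j) l) : F) = 1 := by
        rw [mul_right_comm, hd, mul_inv_cancel, Units.val_one]
      simpa using this
    · simp [hk]
  · simp [Matrix.trace_single_eq_of_ne _ _ _ (Ne.symm hl), hl]

theorem statement12_general {R : Type*} [CommRing R] [IsDomain R] [Nontrivial F]
    [Algebra R F] [Module.IsTorsionFree R F] {d : ι → ι → Fˣ} {s : Equiv.Perm ι} {γ : ι → Fˣ}
    (hd : ∀ i j, d i j * d (s j) i = γ j) {Λ : Subalgebra R (Matrix ι ι F)}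
    (hΛ : ∀ M, M ∈ Λ ↔ ∀ i j, M i j ∈ Submodule.span R {(d i j : F)}) :
    ∃ α : Λ ≃ₐ[R] Λ,
      (∀ u : Λ, (α u : Matrix ι ι F) =
        (monomialGL s γ : Matrix ι ι F)⁻¹ * u * (monomialGL s γ : Matrix ι ι F)) ∧
      ∃ Φ : Λ ≃ₗ[R] (Λ →ₗ[R] R), ∀ a b u m : Λ, Φ (a * u * α b) m = Φ u (b * m * a) := by
  rw [← Matrix.coe_units_inv]
  refine exists_conj_algEquiv_and_twisted_dualEquiv (fun M N => Matrix.trace_mul_comm M N) _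
    (isPermDual_scaledMatrixUnits hd) (Submodule.ext fun M => ?_)
  rw [Subalgebra.mem_toSubmodule, hΛ, mem_span_scaledMatrixUnits_iff]

end TiledOrder

section CyclicOrder

theorem xPow_eq_span (K : Type*) [Field K] (c : ℤ) :
    xPow K c = Submodule.span K[X] {(RatFunc.X : RatFunc K) ^ c} := by
  ext f
  simp only [xPow, Set.mem_ofPred_eq, SetLike.mem_coe, Submodule.mem_span_singleton,
    Algebra.smul_def, mul_comm, eq_comm]

theorem val_finRotate_sq {n : ℕ} (hn : 2 ≤ n) (j : Fin n) :
    ((finRotate n ^ 2) j : ℕ) = if (j : ℕ) + 2 < n then (j : ℕ) + 2 else j + 2 - n := by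
  have hval : ((finRotate n ^ 2) j : ℕ) = (j + 2) % n := by
    obtain ⟨m, rfl⟩ : ∃ m, n = m + 1 := ⟨n - 1, by omega⟩
    simp [pow_two, finRotate_apply, Fin.val_add, add_assoc]
  rw [hval]
  split_ifs with h
  · exact Nat.mod_eq_of_lt h
  · rw [Nat.mod_eq_sub_mod (by omega), Nat.mod_eq_of_lt (by omega)]

/-- The exponent of the nonzero entry in column `j` of `Gmat`. -/
def GmatExp (n : ℕ) (j : Fin n) : ℤ := if (j : ℕ) + 2 < n then 2 else 0

theorem cExp_add_cExp_finRotate_sq {n : ℕ} (hn : 2 ≤ n) (i j : Fin n) :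
    cExp n i j + cExp n ((finRotate n ^ 2) j) i = GmatExp n j := by
  simp only [cExp, GmatExp, val_finRotate_sq hn]
  grind

/-- The variable as a unit of the field of rational functions, so that its integer powers can be
used as weights. -/
def ratFuncXUnit (K : Type*) [Field K] : (RatFunc K)ˣ := Units.mk0 RatFunc.X RatFunc.X_ne_zero

theorem Gmat_eq_monomialGL (K : Type*) [Field K] {n : ℕ} (hn : 2 ≤ n) :
    Gmat K n = monomialGL (finRotate n ^ 2) fun j => ratFuncXUnit K ^ GmatExp n j := by
  ext i j
  simp only [Gmat, Matrix.of_apply, monomialGL_apply, Fin.ext_iff, val_finRotate_sq hn, GmatExp]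
  split_ifs <;> first | omega | simp [ratFuncXUnit, zpow_ofNat]

theorem ratFuncXUnit_zpow_cExp_mul (K : Type*) [Field K] {n : ℕ} (hn : 2 ≤ n) (i j : Fin n) :
    ratFuncXUnit K ^ cExp n i j * ratFuncXUnit K ^ cExp n ((finRotate n ^ 2) j) i =
      ratFuncXUnit K ^ GmatExp n j := by
  rw [← _root_.zpow_add, cExp_add_cExp_finRotate_sq hn]

theorem mem_iff_of_coe_eq_lambdaCarrier {K : Type*} [Field K] {n : ℕ}
    {Λ : Subalgebra K[X] (Matrix (Fin n) (Fin n) (RatFunc K))}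
    (hΛ : (Λ : Set (Matrix (Fin n) (Fin n) (RatFunc K))) = lambdaCarrier K n)
    (M : Matrix (Fin n) (Fin n) (RatFunc K)) :
    M ∈ Λ ↔ ∀ i j,
      M i j ∈ Submodule.span K[X] {((ratFuncXUnit K ^ cExp n i j : (RatFunc K)ˣ) : RatFunc K)} := by
  rw [← SetLike.mem_coe, hΛ]
  simp [lambdaCarrier, xPow_eq_span, ratFuncXUnit]

end CyclicOrder

/-- (a) Conjugation by `G` restricts to a `K[x]`-algebra automorphism `α` of `Λ`, and
(b) there is a `K[x]`-linear bijection `Φ : Λ → Hom_{K[x]}(Λ, K[x])` with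
`Φ(a·u·α(b)) = a·Φ(u)·b`, i.e. `Φ(a·u·α(b))(m) = Φ(u)(b·m·a)`; in other words the twisted
bimodule `₁Λ_α` is isomorphic to the `K[x]`-dual of `Λ` as a `Λ`-bimodule. -/
theorem statement12 (K : Type) [Field K] (n : ℕ) (hn : 3 ≤ n)
    (Λ : Subalgebra (Polynomial K) (Matrix (Fin n) (Fin n) (RatFunc K)))
    (hΛ : (Λ : Set (Matrix (Fin n) (Fin n) (RatFunc K))) = lambdaCarrier K n) :
    ∃ α : ↥Λ ≃ₐ[Polynomial K] ↥Λ,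
      (∀ u : ↥Λ, (↑(α u) : Matrix (Fin n) (Fin n) (RatFunc K))
          = (Gmat K n)⁻¹ * (↑u : Matrix (Fin n) (Fin n) (RatFunc K)) * Gmat K n) ∧
      ∃ Φ : ↥Λ ≃ₗ[Polynomial K] (↥Λ →ₗ[Polynomial K] Polynomial K),
        ∀ a b u m : ↥Λ, Φ (a * u * α b) m = Φ u (b * m * a) := by
  rw [Gmat_eq_monomialGL K (by omega)]
  exact statement12_general (ratFuncXUnit_zpow_cExp_mul K (by omega))
    (mem_iff_of_coe_eq_lambdaCarrier hΛ)
end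
end
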